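/- arXiv:1310.4717 — 2 statements merged into one kernel-verified Lean document; each statement's English description precedes it below -/
import Mathlib

section
/- Let γ ≥ 1 and n ≥ 4 be integers with n ∈ {3γ − 1, 3γ, 3γ + 1}. For every connected nonbipartite graph G of order n with domination number γ, one has q_min(C*_{3,n−4}) ≤ q_min(G), where C*_{3,n−4} has order n, and equality holds if and only if G is isomorphic to C*_{3,n−4}. -/
open scoped Classical

/-- `D` is a dominating set of `G`: every vertex not in `D` is adjacent to a vertex of `D`. -/
def IsDominatingSet {V : Type*} [Fintype V] (G : SimpleGraph V) (D : Finset V) : Prop :=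
  ∀ v, v ∉ D → ∃ u ∈ D, G.Adj u v

/-- The domination number of `G`: minimum cardinality of a dominating set. -/
noncomputable def dominationNumber {V : Type*} [Fintype V] (G : SimpleGraph V) : ℕ :=
  sInf {k | ∃ D : Finset V, IsDominatingSet G D ∧ D.card = k}

/-- Edge relation for the graph `C*_{s,l}` on vertex indices `0, …, n-1`:
vertices `0, …, s-1` form a cycle `C_s` (with `0` playing the role of `v_1`);
vertices `0, s, s+1, …, s+l-1` form a path of length `l` hanging at `0`;
and all remaining vertices `s+l, …, n-1` are pendant vertices attached to the
other end of the path (to `0` itself when `l = 0`). -/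
def cstarRel (s l : ℕ) (a b : ℕ) : Prop :=
  (b = a + 1 ∧ a + 1 < s) ∨
  (a = 0 ∧ b = s - 1) ∨
  (1 ≤ l ∧ a = 0 ∧ b = s) ∨
  (b = a + 1 ∧ s ≤ a ∧ a + 1 < s + l) ∨
  (a = (if l = 0 then 0 else s + l - 1) ∧ s + l ≤ b)

/-- The graph `C*_{s,l}` of order `n`: a cycle `C_s` with a path of length `l`
attached, and `n - s - l` pendant edges attached at the far end of the path. -/
def Cstar (n s l : ℕ) : SimpleGraph (Fin n) :=
  SimpleGraph.fromRel (fun i j => cstarRel s l i.val j.val)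

/-- The signless Laplacian matrix `Q(G) = D(G) + A(G)` of a finite simple graph. -/
noncomputable def signlessLaplacian {V : Type*} [Fintype V] (G : SimpleGraph V) :
    Matrix V V ℝ :=
  fun i j => (if i = j then (G.degree i : ℝ) else 0) + (if G.Adj i j then 1 else 0)

/-- The least eigenvalue of the signless Laplacian of `G`. -/
noncomputable def qmin {V : Type*} [Fintype V] (G : SimpleGraph V) : ℝ :=
  sInf {μ : ℝ | ∃ x : V → ℝ, x ≠ 0 ∧ (signlessLaplacian G).mulVec x = μ • x}


/-! ### Spectral preliminaries -/

/-- quadratic form of the signless Laplacian, as a double sum -/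
lemma qform_eq {V : Type*} [Fintype V] (G : SimpleGraph V) (x : V → ℝ) :
    2 * (x ⬝ᵥ (signlessLaplacian G).mulVec x) =
      ∑ i, ∑ j, if G.Adj i j then (x i + x j) ^ 2 else 0 := by
  have h1 : x ⬝ᵥ (signlessLaplacian G).mulVec x =
      ∑ i, (G.degree i : ℝ) * x i ^ 2 + ∑ i, ∑ j, if G.Adj i j then x i * x j else 0 := by
    simp only [dotProduct, Matrix.mulVec, signlessLaplacian]
    rw [← Finset.sum_add_distrib]
    refine Finset.sum_congr rfl fun i _ => ?_
    simp only [add_mul, Finset.sum_add_distrib, ite_mul, zero_mul, one_mul,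
      Finset.sum_ite_eq, Finset.mem_univ, if_true, mul_add, Finset.mul_sum, mul_ite, mul_zero]
    ring
  have h2 : ∀ i, (G.degree i : ℝ) * x i ^ 2 = ∑ j, if G.Adj i j then x i ^ 2 else 0 := by
    intro i
    rw [← Finset.sum_filter, Finset.sum_const, nsmul_eq_mul]
    congr 2
    rw [← SimpleGraph.card_neighborFinset_eq_degree]
    congr 1
    ext j
    simp
  have h3 : ∑ i, (G.degree i : ℝ) * x i ^ 2 = ∑ i, ∑ j, if G.Adj i j then x j ^ 2 else 0 := by
    rw [Finset.sum_comm]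
    refine Finset.sum_congr rfl fun i _ => ?_
    rw [h2]
    refine Finset.sum_congr rfl fun j _ => ?_
    simp [G.adj_comm]
  have h4 : (2 : ℝ) * (x ⬝ᵥ (signlessLaplacian G).mulVec x) =
      ∑ i, (G.degree i : ℝ) * x i ^ 2 + ∑ i, (G.degree i : ℝ) * x i ^ 2
        + 2 * ∑ i, ∑ j, if G.Adj i j then x i * x j else 0 := by
    rw [h1]; ring
  rw [h4]
  conv_lhs => enter [1, 1]; rw [Finset.sum_congr rfl fun i _ => h2 i]
  rw [h3, Finset.mul_sum, ← Finset.sum_add_distrib, ← Finset.sum_add_distrib]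
  refine Finset.sum_congr rfl fun i _ => ?_
  rw [Finset.mul_sum, ← Finset.sum_add_distrib, ← Finset.sum_add_distrib]
  refine Finset.sum_congr rfl fun j _ => ?_
  split_ifs <;> ring

lemma signless_herm {V : Type*} [Fintype V] (G : SimpleGraph V) :
    (signlessLaplacian G).IsHermitian := by
  ext i j
  simp only [Matrix.conjTranspose_apply, signlessLaplacian, star_trivial, G.adj_comm j i]
  by_cases h : i = j
  · subst h; rfl
  · rw [if_neg h, if_neg (Ne.symm h)]

lemma dot_self_pos {V : Type*} [Fintype V] {x : V → ℝ} (hx : x ≠ 0) : 0 < x ⬝ᵥ x := by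
  obtain ⟨i, hi⟩ := Function.ne_iff.1 hx
  simp only [dotProduct]
  exact Finset.sum_pos' (fun j _ => mul_self_nonneg _) ⟨i, Finset.mem_univ _, mul_self_pos.2 hi⟩

/-- `qmin` is attained, and is a lower bound for the Rayleigh quotient. -/
lemma qmin_spec {V : Type*} [Fintype V] [Nonempty V] (G : SimpleGraph V) :
    (∃ x : V → ℝ, x ≠ 0 ∧ x ⬝ᵥ (signlessLaplacian G).mulVec x = qmin G * (x ⬝ᵥ x)) ∧
    ∀ x : V → ℝ, qmin G * (x ⬝ᵥ x) ≤ x ⬝ᵥ (signlessLaplacian G).mulVec x := by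
  set Q := signlessLaplacian G with hQ
  obtain ⟨x0, hx0, hmin⟩ := (isCompact_sphere (0 : V → ℝ) 1).exists_isMinOn
    (NormedSpace.sphere_nonempty.2 zero_le_one)
    (f := fun x => (x ⬝ᵥ Q.mulVec x) / (x ⬝ᵥ x)) (by
      apply ContinuousOn.div
      · apply Continuous.continuousOn
        simp only [dotProduct, Matrix.mulVec]
        fun_prop
      · apply Continuous.continuousOn
        simp only [dotProduct]
        fun_prop
      · intro x hx
        have : x ≠ 0 := by
          rintro rfl
          simp at hx
        exact (dot_self_pos this).ne')
  have hx0' : x0 ≠ 0 := by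
    rintro rfl
    simp at hx0
  set m := (x0 ⬝ᵥ Q.mulVec x0) / (x0 ⬝ᵥ x0) with hm
  have hm' : x0 ⬝ᵥ Q.mulVec x0 = m * (x0 ⬝ᵥ x0) := by
    rw [hm, div_mul_cancel₀ _ (dot_self_pos hx0').ne']
  have hlow : ∀ x : V → ℝ, m * (x ⬝ᵥ x) ≤ x ⬝ᵥ Q.mulVec x := by
    intro x
    by_cases hx : x = 0
    · subst hx; simp
    have hn : 0 < ‖x‖ := norm_pos_iff.2 hx
    have h1 : (‖x‖⁻¹ • x) ∈ Metric.sphere (0 : V → ℝ) 1 := by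
      simp [norm_smul, hn.ne']
    have h2 := hmin h1
    simp only [Set.mem_ofPred_eq, Matrix.mulVec_smul, smul_dotProduct, dotProduct_smul,
      smul_eq_mul] at h2
    rw [← mul_assoc, ← mul_assoc, mul_div_mul_left _ _ (by positivity)] at h2
    exact (le_div_iff₀ (dot_self_pos hx)).1 h2
  have hpsd : (Q - m • (1 : Matrix V V ℝ)).PosSemidef := by
    apply Matrix.PosSemidef.of_dotProduct_mulVec_nonneg
    · apply (signless_herm G).sub
      ext i j
      simp [Matrix.one_apply, eq_comm]
    · intro x
      have := hlow x
      simp only [star_trivial, Matrix.sub_mulVec, Matrix.smul_mulVec, Matrix.one_mulVec,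
        dotProduct_sub, dotProduct_smul, smul_eq_mul]
      linarith
  have hker := (hpsd.dotProduct_mulVec_zero_iff x0).1 (by
      simp only [star_trivial, Matrix.sub_mulVec, Matrix.smul_mulVec, Matrix.one_mulVec,
        dotProduct_sub, dotProduct_smul, smul_eq_mul]
      linarith)
  have heig : Q.mulVec x0 = m • x0 := by
    simp only [Matrix.sub_mulVec, Matrix.smul_mulVec, Matrix.one_mulVec] at hker
    exact sub_eq_zero.1 hker
  have hq : qmin G = m := by
    unfold qmin
    apply IsLeast.csInf_eq
    refine ⟨⟨x0, hx0', heig⟩, ?_⟩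
    rintro μ ⟨x, hx, hxe⟩
    have h := hlow x
    rw [← hQ] at hxe
    rw [hxe, dotProduct_smul, smul_eq_mul] at h
    exact le_of_mul_le_mul_right h (dot_self_pos hx)
  rw [hq]
  exact ⟨⟨x0, hx0', hm'⟩, hlow⟩

lemma qform_iso {V W : Type*} [Fintype V] [Fintype W] {G : SimpleGraph V} {H : SimpleGraph W}
    (e : G ≃g H) (x : W → ℝ) :
    (x ∘ e) ⬝ᵥ (signlessLaplacian G).mulVec (x ∘ e) = x ⬝ᵥ (signlessLaplacian H).mulVec x := by
  have h1 := qform_eq G (x ∘ e)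
  have h2 := qform_eq H x
  have h3 : (∑ i, ∑ j, if G.Adj i j then ((x ∘ e) i + (x ∘ e) j) ^ 2 else 0) =
      ∑ i, ∑ j, if H.Adj i j then (x i + x j) ^ 2 else 0 := by
    refine Fintype.sum_equiv e.toEquiv _ _ fun i => ?_
    refine Fintype.sum_equiv e.toEquiv _ _ fun j => ?_
    simp [e.map_adj_iff]
  linarith

lemma dot_iso {V W : Type*} [Fintype V] [Fintype W] (e : V ≃ W) (x : W → ℝ) :
    (x ∘ e) ⬝ᵥ (x ∘ e) = x ⬝ᵥ x := by
  simp only [dotProduct]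
  exact Fintype.sum_equiv e _ _ fun i => rfl

lemma qmin_le_iso {V W : Type*} [Fintype V] [Fintype W] [Nonempty V] {G : SimpleGraph V}
    {H : SimpleGraph W} (e : G ≃g H) : qmin G ≤ qmin H := by
  have : Nonempty W := ⟨e (Classical.arbitrary V)⟩
  obtain ⟨x, hx, hxe⟩ := (qmin_spec H).1
  have h := (qmin_spec G).2 (x ∘ e)
  rw [qform_iso e, dot_iso e.toEquiv x |> (fun h => (h : (x ∘ e) ⬝ᵥ (x ∘ e) = x ⬝ᵥ x)), hxe] at h
  exact le_of_mul_le_mul_right h (dot_self_pos hx)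

lemma qmin_iso {V W : Type*} [Fintype V] [Fintype W] [Nonempty V] {G : SimpleGraph V}
    {H : SimpleGraph W} (e : G ≃g H) : qmin G = qmin H := by
  have : Nonempty W := ⟨e (Classical.arbitrary V)⟩
  exact le_antisymm (qmin_le_iso e) (qmin_le_iso e.symm)

/-! ### A non-bridge edge with equal signs -/

lemma exists_cross {V : Type*} {H : SimpleGraph V} (hH : H.Connected) (S : Set V) {a b : V}
    (ha : a ∈ S) (hb : b ∉ S) : ∃ u v, u ∈ S ∧ v ∉ S ∧ H.Adj u v := by
  obtain ⟨w⟩ := hH.preconnected a b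
  obtain ⟨d, -, h1, h2⟩ := w.exists_boundary_dart S ha hb
  exact ⟨d.fst, d.snd, h1, h2, d.adj⟩

lemma exists_nonbridge {V : Type*} [Fintype V] (G : SimpleGraph V) (hc : G.Connected)
    (hnb : ¬ G.Colorable 2) (x : V → ℝ) :
    ∃ u v, G.Adj u v ∧ 0 ≤ x u * x v ∧ (G.deleteEdges {s(u, v)}).Connected := by
  let good : Set (V → Bool) := {c | ∀ a b, G.Adj a b → x a * x b < 0 → c a ≠ c b}
  let mono : (V → Bool) → Finset (V × V) := fun c =>
    Finset.univ.filter fun p => G.Adj p.1 p.2 ∧ c p.1 = c p.2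
  have hne : good.Nonempty := by
    refine ⟨fun a => decide (0 < x a), ?_⟩
    intro a b _ hab h
    rcases mul_neg_iff.1 hab with ⟨h1, h2⟩ | ⟨h1, h2⟩
    · simp [h1] at h
      linarith
    · simp [h2] at h
      linarith
  obtain ⟨c, hcg, hcmin⟩ : ∃ c ∈ good, ∀ c' ∈ good, (mono c).card ≤ (mono c').card := by
    obtain ⟨c, h1, h2⟩ := good.toFinite.exists_minimalFor (fun c => (mono c).card) good hne
    refine ⟨c, h1, fun c' h => ?_⟩
    by_contra hlt
    push Not at hlt
    exact absurd (h2 h hlt.le) (by simpa using hlt)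
  have hmono : ∃ u v, G.Adj u v ∧ c u = c v := by
    by_contra hno
    push Not at hno
    apply hnb
    have : G.Coloring Bool := SimpleGraph.Coloring.mk c (fun {a b} h => hno a b h)
    simpa using this.colorable
  obtain ⟨u, v, huv, hcuv⟩ := hmono
  refine ⟨u, v, huv, ?_, ?_⟩
  · by_contra h
    push Not at h
    exact hcg u v huv h hcuv
  apply hc.connected_delete_edge_of_not_isBridge
  intro hbr
  rw [SimpleGraph.isBridge_iff] at hbr
  set H := G.deleteEdges {s(u, v)} with hH
  let c' : V → Bool := fun a => if H.Reachable u a then !(c a) else c a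
  have hH' : ∀ a b, G.Adj a b → s(a, b) ≠ s(u, v) → (c' a = c' b ↔ c a = c b) := by
    intro a b hab hne
    have hadj : H.Adj a b := by
      rw [hH, SimpleGraph.deleteEdges_adj]
      exact ⟨hab, hne⟩
    have : H.Reachable u a ↔ H.Reachable u b :=
      ⟨fun h => h.trans hadj.reachable, fun h => h.trans hadj.symm.reachable⟩
    by_cases h : H.Reachable u a
    · have h' := this.1 h
      simp [c', h, h']
    · have h' := mt this.2 h
      simp [c', h, h']
  have huv' : c' u ≠ c' v := by
    have : c' u = !(c u) := by simp [c']
    rw [this]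
    have : c' v = c v := by simp [c', hbr]
    rw [this, hcuv]
    simp
  have hvu' : ∀ a b, s(a, b) = s(u, v) → c' a ≠ c' b := by
    intro a b h
    rcases Sym2.eq_iff.1 h with ⟨rfl, rfl⟩ | ⟨rfl, rfl⟩
    · exact huv'
    · exact huv'.symm
  have hg' : c' ∈ good := by
    intro a b hab hlt
    by_cases he : s(a, b) = s(u, v)
    · exact hvu' a b he
    · exact fun h => hcg a b hab hlt ((hH' a b hab he).1 h)
  have hlt : (mono c').card < (mono c).card := by
    apply Finset.card_lt_card
    refine ⟨?_, ?_⟩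
    · intro p hp
      simp only [mono, Finset.mem_filter, Finset.mem_univ, true_and] at hp ⊢
      refine ⟨hp.1, (hH' _ _ hp.1 fun he => hvu' _ _ he hp.2).1 hp.2⟩
    · intro hsub
      have h1 : (u, v) ∈ mono c := by simp [mono, huv, hcuv]
      have h2 := hsub h1
      simp only [mono, Finset.mem_filter, Finset.mem_univ, true_and] at h2
      exact huv' h2.2
  exact absurd (hcmin c' hg') (by omega)

/-! ### Energies on `Fin (m + 1)` -/

/-- ordered edges of a graph on `Fin (m + 1)` -/
noncomputable def ordEdges {m : ℕ} (G : SimpleGraph (Fin (m + 1))) :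
    Finset (Fin (m + 1) × Fin (m + 1)) :=
  Finset.univ.filter fun p => p.1 < p.2 ∧ G.Adj p.1 p.2

lemma mem_ordEdges {m : ℕ} {G : SimpleGraph (Fin (m + 1))} {p : Fin (m + 1) × Fin (m + 1)} :
    p ∈ ordEdges G ↔ p.1 < p.2 ∧ G.Adj p.1 p.2 := by
  simp [ordEdges]

lemma qform_ord {m : ℕ} (G : SimpleGraph (Fin (m + 1))) (x : Fin (m + 1) → ℝ) :
    x ⬝ᵥ (signlessLaplacian G).mulVec x = ∑ p ∈ ordEdges G, (x p.1 + x p.2) ^ 2 := by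
  have h := qform_eq G x
  rw [← Finset.sum_product', Finset.univ_product_univ, ← Finset.sum_filter] at h
  have hsplit : (Finset.univ.filter fun p : Fin (m + 1) × Fin (m + 1) => G.Adj p.1 p.2) =
      ordEdges G ∪ (ordEdges G).map (Equiv.prodComm _ _).toEmbedding := by
    ext ⟨a, b⟩
    simp only [Finset.mem_filter, Finset.mem_univ, true_and, Finset.mem_union, mem_ordEdges,
      Finset.mem_map_equiv, Equiv.prodComm_symm, Equiv.prodComm_apply, Prod.swap]
    constructor
    · intro h
      rcases lt_trichotomy a b with h1 | h1 | h1
      · exact Or.inl ⟨h1, h⟩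
      · exact absurd h1 h.ne
      · exact Or.inr ⟨h1, h.symm⟩
    · rintro (h | h)
      · exact h.2
      · exact h.2.symm
  have hdisj : Disjoint (ordEdges G) ((ordEdges G).map (Equiv.prodComm _ _).toEmbedding) := by
    rw [Finset.disjoint_left]
    rintro ⟨a, b⟩ h1 h2
    simp only [mem_ordEdges,
      Finset.mem_map_equiv, Equiv.prodComm_symm, Equiv.prodComm_apply, Prod.swap] at h1 h2
    exact absurd h1.1 (not_lt.2 h2.1.le)
  rw [hsplit, Finset.sum_union hdisj, Finset.sum_map] at h
  have h2 : ∑ p ∈ ordEdges G, (x ((Equiv.prodComm _ _).toEmbedding p).1 +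
      x ((Equiv.prodComm _ _).toEmbedding p).2) ^ 2 = ∑ p ∈ ordEdges G, (x p.1 + x p.2) ^ 2 := by
    refine Finset.sum_congr rfl fun p _ => ?_
    simp [add_comm]
  rw [h2] at h
  linarith

/-- consecutive gap -/
def gap (Y : ℕ → ℝ) (k : ℕ) : ℝ := Y (k + 1) - Y k

lemma gap_nonneg {Y : ℕ → ℝ} (hY : Monotone Y) (k : ℕ) : 0 ≤ gap Y k :=
  sub_nonneg.2 (hY (Nat.le_succ k))

lemma gap_step {Y : ℕ → ℝ} (hY : Monotone Y) {i j0 j : ℕ} (h0 : i ≤ j0) (h1 : j0 ≤ j) :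
    (Y j0 - Y i) ^ 2 - ∑ k ∈ Finset.Ico i j0, gap Y k ^ 2 ≤
      (Y j - Y i) ^ 2 - ∑ k ∈ Finset.Ico i j, gap Y k ^ 2 := by
  induction j, h1 using Nat.le_induction with
  | base => exact le_rfl
  | succ j hj ih =>
    refine ih.trans ?_
    rw [Finset.sum_Ico_succ_top (h0.trans hj)]
    have h2 := gap_nonneg hY j
    have h3 : Y i ≤ Y j := hY (h0.trans hj)
    have h4 : Y (j + 1) = Y j + gap Y j := by simp [gap]
    rw [h4]
    nlinarith [mul_nonneg h2 (sub_nonneg.2 h3)]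

/-- lower weight of an edge -/
noncomputable def wt (Y : ℕ → ℝ) (i j : ℕ) : ℝ :=
  ∑ k ∈ Finset.Ico i j, gap Y k ^ 2 + if i = 0 ∧ 2 ≤ j then 2 * gap Y 0 * gap Y 1 else 0

lemma wt_le {Y : ℕ → ℝ} (hY : Monotone Y) {i j : ℕ} (h : i ≤ j) :
    wt Y i j ≤ (Y j - Y i) ^ 2 := by
  unfold wt
  split_ifs with h0
  · obtain ⟨rfl, h2⟩ := h0
    have := gap_step hY (Nat.zero_le 2) h2
    simp only [← Finset.range_eq_Ico, Finset.sum_range_succ, Finset.sum_range_zero] at this ⊢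
    have e : Y 2 - Y 0 = gap Y 0 + gap Y 1 := by simp [gap]
    rw [e] at this
    nlinarith
  · have := gap_step hY (le_refl i) h
    simp at this
    linarith

lemma wt_lt {Y : ℕ → ℝ} (hY : Monotone Y) {m i j : ℕ} (hpos : ∀ k, 1 ≤ k → k < m → 0 < gap Y k)
    (h : i + 2 ≤ j) (hjm : j ≤ m) (h02 : ¬ (i = 0 ∧ j = 2)) :
    wt Y i j < (Y j - Y i) ^ 2 := by
  unfold wt
  rcases Nat.eq_zero_or_pos i with rfl | hi
  · have hj3 : 3 ≤ j := by omega
    rw [if_pos ⟨rfl, by omega⟩]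
    have := gap_step hY (Nat.zero_le 3) hj3
    simp only [← Finset.range_eq_Ico, Finset.sum_range_succ, Finset.sum_range_zero] at this ⊢
    have e : Y 3 - Y 0 = gap Y 0 + gap Y 1 + gap Y 2 := by simp [gap]
    rw [e] at this
    have h1 := hpos 1 le_rfl (by omega)
    have h2 := hpos 2 (by omega) (by omega)
    nlinarith [mul_pos h1 h2, mul_nonneg (gap_nonneg hY 0) h2.le]
  · rw [if_neg (by omega)]
    have := gap_step hY (show i ≤ i + 2 by omega) h
    rw [Finset.sum_Ico_succ_top (by omega), Finset.sum_Ico_succ_top (by omega)] at this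
    simp only [Finset.Ico_self, Finset.sum_empty] at this
    have e : Y (i + 2) - Y i = gap Y i + gap Y (i + 1) := by simp [gap]
    rw [e] at this
    have h1 := hpos i hi (by omega)
    have h2 := hpos (i + 1) (by omega) (by omega)
    nlinarith [mul_pos h1 h2]

/-- energy of the lollipop -/
noncomputable def lolE (m : ℕ) (Y : ℕ → ℝ) : ℝ :=
  (Y 0 + Y 1) ^ 2 + (Y 2 - Y 0) ^ 2 + ∑ k ∈ Finset.Ico 1 m, gap Y k ^ 2

lemma exists_cross_level {m : ℕ} {H : SimpleGraph (Fin (m + 1))} (hH : H.Connected) {k : ℕ}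
    (hk : k < m) : ∃ a b : Fin (m + 1), a.val ≤ k ∧ k < b.val ∧ H.Adj a b := by
  obtain ⟨a, b, h1, h2, h3⟩ := exists_cross hH {a | a.val ≤ k} (a := ⟨0, by omega⟩)
    (b := ⟨m, by omega⟩) (by simp) (by simpa using hk)
  exact ⟨a, b, h1, by simpa using h2, h3⟩

lemma exists_nbr {m : ℕ} (hm : 1 ≤ m) {H : SimpleGraph (Fin (m + 1))} (hH : H.Connected)
    (a : Fin (m + 1)) : ∃ b, H.Adj a b := by
  have : ∃ c : Fin (m + 1), c ≠ a := by
    have : Nontrivial (Fin (m + 1)) := Fin.nontrivial_iff_two_le.2 (by omega)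
    exact exists_ne a
  obtain ⟨c, hc⟩ := this
  obtain ⟨a', b, h1, h2, h3⟩ := exists_cross hH {a} (a := a) (b := c) (by simp) (by simpa using hc)
  obtain rfl : a' = a := by simpa using h1
  exact ⟨b, h3⟩

lemma count_bound {m : ℕ} (hm : 3 ≤ m) (G : SimpleGraph (Fin (m + 1))) {u v : Fin (m + 1)}
    (huv : u < v) (hadj : G.Adj u v) (hc : (G.deleteEdges {s(u, v)}).Connected)
    {Y : ℕ → ℝ} (hY : Monotone Y) (hY0 : 0 ≤ Y 0) :
    lolE m Y ≤ ∑ p ∈ ordEdges G, wt Y p.1 p.2 + 4 * (Y u * Y v) := by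
  set P := ordEdges G with hP
  let c : ℕ → ℕ := fun k => (P.filter fun p => p.1.val ≤ k ∧ k < p.2.val).card
  let C : ℕ := (P.filter fun p => p.1.val = 0 ∧ 2 ≤ p.2.val).card
  have hdel : ∀ {a b}, (G.deleteEdges {s(u, v)}).Adj a b → G.Adj a b ∧ s(a, b) ≠ s(u, v) := by
    intro a b h
    rw [SimpleGraph.deleteEdges_adj] at h
    exact ⟨h.1, by simpa using h.2⟩
  have hsum : ∑ p ∈ P, wt Y p.1 p.2 =
      ∑ k ∈ Finset.range m, (c k : ℝ) * gap Y k ^ 2 + C * (2 * gap Y 0 * gap Y 1) := by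
    unfold wt
    rw [Finset.sum_add_distrib]
    congr 1
    · have : ∀ p ∈ P, ∑ k ∈ Finset.Ico p.1.val p.2.val, gap Y k ^ 2 =
          ∑ k ∈ Finset.range m, if p.1.val ≤ k ∧ k < p.2.val then gap Y k ^ 2 else 0 := by
        intro p _
        rw [← Finset.sum_filter]
        refine Finset.sum_congr ?_ fun _ _ => rfl
        ext k
        simp only [Finset.mem_Ico, Finset.mem_filter, Finset.mem_range]
        have := p.2.isLt
        omega
      rw [Finset.sum_congr rfl this, Finset.sum_comm]
      refine Finset.sum_congr rfl fun k _ => ?_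
      rw [← Finset.sum_filter, Finset.sum_const, nsmul_eq_mul]
    · rw [← Finset.sum_filter, Finset.sum_const, nsmul_eq_mul]
  have memc : ∀ {k : ℕ} {a b : Fin (m + 1)}, a.val ≤ k → k < b.val → G.Adj a b →
      (a, b) ∈ P.filter fun p => p.1.val ≤ k ∧ k < p.2.val := by
    intro k a b h1 h2 h3
    rw [Finset.mem_filter, hP, mem_ordEdges]
    exact ⟨⟨show a.val < b.val by omega, h3⟩, h1, h2⟩
  have memC : ∀ {a b : Fin (m + 1)}, a.val = 0 → 2 ≤ b.val → G.Adj a b →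
      (a, b) ∈ P.filter fun p => p.1.val = 0 ∧ 2 ≤ p.2.val := by
    intro a b h1 h2 h3
    rw [Finset.mem_filter, hP, mem_ordEdges]
    exact ⟨⟨show a.val < b.val by omega, h3⟩, h1, h2⟩
  have hc1 : ∀ k < m, 1 ≤ c k := by
    intro k hk
    obtain ⟨a, b, h1, h2, h3⟩ := exists_cross_level hc hk
    exact Finset.card_pos.2 ⟨_, memc h1 h2 (hdel h3).1⟩
  -- if `uv` crosses the level, there is a second crossing
  have hc2 : ∀ k < m, u.val ≤ k → k < v.val → 2 ≤ c k := by
    intro k hk h1 h2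
    obtain ⟨a, b, h3, h4, h5⟩ := exists_cross_level hc hk
    refine Finset.one_lt_card.2 ⟨_, memc h1 h2 hadj, _, memc h3 h4 (hdel h5).1, ?_⟩
    intro he
    apply (hdel h5).2
    rw [Prod.mk.injEq] at he
    rw [he.1, he.2]
  have hlow : ∑ k ∈ Finset.range m, gap Y k ^ 2 + ((c 0 : ℝ) - 1) * gap Y 0 ^ 2
      + ((c 1 : ℝ) - 1) * gap Y 1 ^ 2 ≤ ∑ k ∈ Finset.range m, (c k : ℝ) * gap Y k ^ 2 := by
    have h1 : ∑ k ∈ Finset.range 2, ((c k : ℝ) - 1) * gap Y k ^ 2 ≤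
        ∑ k ∈ Finset.range m, ((c k : ℝ) - 1) * gap Y k ^ 2 := by
      apply Finset.sum_le_sum_of_subset_of_nonneg
      · exact Finset.range_mono (by omega)
      · intro k hk _
        have : (1 : ℝ) ≤ c k := by exact_mod_cast hc1 k (Finset.mem_range.1 hk)
        exact mul_nonneg (by linarith) (sq_nonneg _)
    simp only [sub_mul, Finset.sum_sub_distrib, Finset.sum_range_succ, Finset.sum_range_zero,
      one_mul] at h1
    linarith
  have hT : lolE m Y = ∑ k ∈ Finset.range m, gap Y k ^ 2 + (gap Y 0 + gap Y 1) ^ 2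
      + 4 * (Y 0 * Y 1) := by
    unfold lolE
    rw [Finset.range_eq_Ico, Finset.sum_eq_sum_Ico_succ_bot (by omega : 0 < m)]
    simp only [gap]
    ring
  have g0 := gap_nonneg hY 0
  have g1 := gap_nonneg hY 1
  have e1 : Y 1 = Y 0 + gap Y 0 := by simp [gap]
  have e2 : Y 2 = Y 0 + gap Y 0 + gap Y 1 := by simp [gap]
  have c01 : (1 : ℝ) ≤ c 0 := by exact_mod_cast hc1 0 (by omega)
  have c11 : (1 : ℝ) ≤ c 1 := by exact_mod_cast hc1 1 (by omega)
  have C0 : (0 : ℝ) ≤ C := by positivity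
  have huv' : u.val < v.val := huv
  rw [hsum, hT]
  rcases Nat.lt_or_ge 1 u.val with hu | hu
  · -- both ends at height at least two
    have h1 : Y 2 ≤ Y u := hY hu
    have h2 : Y 2 ≤ Y v := hY (by omega)
    have h3 : Y 2 * Y 2 ≤ Y u * Y v :=
      mul_le_mul h1 h2 (hY0.trans (hY (by omega))) (hY0.trans (hY (by omega)))
    have h4 : 0 ≤ ((c 0 : ℝ) - 1) * gap Y 0 ^ 2 := mul_nonneg (by linarith) (sq_nonneg _)
    have h5 : 0 ≤ ((c 1 : ℝ) - 1) * gap Y 1 ^ 2 := mul_nonneg (by linarith) (sq_nonneg _)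
    have h6 : 0 ≤ (C : ℝ) * (2 * gap Y 0 * gap Y 1) := by positivity
    rw [e2] at h3
    rw [e1]
    nlinarith [mul_nonneg hY0 g0, mul_nonneg hY0 g1, mul_nonneg g0 g1]
  rcases Nat.eq_zero_or_pos u.val with hu0 | hu0
  · rcases Nat.lt_or_ge 1 v.val with hv | hv
    · have k0 : (2 : ℝ) ≤ c 0 := by exact_mod_cast hc2 0 (by omega) (by omega) (by omega)
      have k1 : (2 : ℝ) ≤ c 1 := by exact_mod_cast hc2 1 (by omega) (by omega) (by omega)
      have k2 : (1 : ℝ) ≤ C := by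
        have : 1 ≤ C := Finset.card_pos.2 ⟨_, memC hu0 hv hadj⟩
        exact_mod_cast this
      have h4 : gap Y 0 ^ 2 ≤ ((c 0 : ℝ) - 1) * gap Y 0 ^ 2 :=
        le_mul_of_one_le_left (sq_nonneg _) (by linarith)
      have h5 : gap Y 1 ^ 2 ≤ ((c 1 : ℝ) - 1) * gap Y 1 ^ 2 :=
        le_mul_of_one_le_left (sq_nonneg _) (by linarith)
      have h6 : 2 * gap Y 0 * gap Y 1 ≤ (C : ℝ) * (2 * gap Y 0 * gap Y 1) :=
        le_mul_of_one_le_left (by positivity) k2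
      have h7 : Y 0 * Y 1 ≤ Y u * Y v := by
        rw [hu0]
        exact mul_le_mul_of_nonneg_left (hY (by omega)) hY0
      nlinarith
    · have hv1 : v.val = 1 := by omega
      obtain ⟨r, hr⟩ := exists_nbr (by omega) hc u
      obtain ⟨s, hs⟩ := exists_nbr (by omega) hc v
      obtain ⟨hr1, hr2⟩ := hdel hr
      obtain ⟨hs1, hs2⟩ := hdel hs
      have hr3 : 2 ≤ r.val := by
        have h1 : r.val ≠ 0 := fun h => hr1.ne (Fin.ext (by omega))
        have h2 : r.val ≠ 1 := fun h => hr2 (by rw [show r = v from Fin.ext (by omega)])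
        omega
      have hs3 : 2 ≤ s.val := by
        have h1 : s.val ≠ 1 := fun h => hs1.ne (Fin.ext (by omega))
        have h2 : s.val ≠ 0 := fun h => hs2 (by
          rw [show s = u from Fin.ext (by omega), Sym2.eq_swap])
        omega
      have k0 : (2 : ℝ) ≤ c 0 := by exact_mod_cast hc2 0 (by omega) (by omega) (by omega)
      have k1 : (2 : ℝ) ≤ c 1 := by
        have : 1 < c 1 := Finset.one_lt_card.2 ⟨_, memc (k := 1) (by omega) (by omega) hr1,
          _, memc (k := 1) (by omega) (by omega) hs1, by
            intro he
            rw [Prod.mk.injEq] at he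
            exact huv.ne he.1⟩
        exact_mod_cast this
      have k2 : (1 : ℝ) ≤ C := by
        have : 1 ≤ C := Finset.card_pos.2 ⟨_, memC hu0 hr3 hr1⟩
        exact_mod_cast this
      have h4 : gap Y 0 ^ 2 ≤ ((c 0 : ℝ) - 1) * gap Y 0 ^ 2 :=
        le_mul_of_one_le_left (sq_nonneg _) (by linarith)
      have h5 : gap Y 1 ^ 2 ≤ ((c 1 : ℝ) - 1) * gap Y 1 ^ 2 :=
        le_mul_of_one_le_left (sq_nonneg _) (by linarith)
      have h6 : 2 * gap Y 0 * gap Y 1 ≤ (C : ℝ) * (2 * gap Y 0 * gap Y 1) :=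
        le_mul_of_one_le_left (by positivity) k2
      rw [hu0, hv1]
      nlinarith
  · have hu1 : u.val = 1 := by omega
    have k1 : (2 : ℝ) ≤ c 1 := by exact_mod_cast hc2 1 (by omega) (by omega) (by omega)
    have h4 : 0 ≤ ((c 0 : ℝ) - 1) * gap Y 0 ^ 2 := mul_nonneg (by linarith) (sq_nonneg _)
    have h5 : gap Y 1 ^ 2 ≤ ((c 1 : ℝ) - 1) * gap Y 1 ^ 2 :=
      le_mul_of_one_le_left (sq_nonneg _) (by linarith)
    have h6 : 0 ≤ (C : ℝ) * (2 * gap Y 0 * gap Y 1) := by positivity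
    have h7 : Y 1 * Y 2 ≤ Y u * Y v := by
      rw [hu1]
      exact mul_le_mul_of_nonneg_left (hY (by omega)) (hY0.trans (hY (by omega)))
    rw [e1, e2] at h7
    rw [e1]
    nlinarith [mul_nonneg hY0 g0, mul_nonneg hY0 g1, mul_nonneg g0 g1]

/-- lower bound of the energy of `G` at a vector sorted by absolute value -/
lemma energy_bound {m : ℕ} (hm : 3 ≤ m) (G : SimpleGraph (Fin (m + 1))) {u v : Fin (m + 1)}
    (huv : u < v) (hadj : G.Adj u v) (hc : (G.deleteEdges {s(u, v)}).Connected)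
    {Y : ℕ → ℝ} (hY : Monotone Y) (hY0 : 0 ≤ Y 0) (x : Fin (m + 1) → ℝ)
    (hx : ∀ i, |x i| = Y i) (hsign : 0 ≤ x u * x v) :
    lolE m Y ≤ ∑ p ∈ ordEdges G, (x p.1 + x p.2) ^ 2 ∧
    ((∀ k, 1 ≤ k → k < m → 0 < gap Y k) →
      (∃ p ∈ ordEdges G, p.1.val + 2 ≤ p.2.val ∧ ¬ (p.1.val = 0 ∧ p.2.val = 2)) →
      lolE m Y < ∑ p ∈ ordEdges G, (x p.1 + x p.2) ^ 2) := by
  have hcount := count_bound hm G huv hadj hc hY hY0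
  have hmem : (u, v) ∈ ordEdges G := mem_ordEdges.2 ⟨huv, hadj⟩
  have hsum : ∑ p ∈ ordEdges G, (wt Y p.1 p.2 + if p = (u, v) then 4 * (Y u * Y v) else 0) =
      ∑ p ∈ ordEdges G, wt Y p.1 p.2 + 4 * (Y u * Y v) := by
    rw [Finset.sum_add_distrib, Finset.sum_ite_eq' _ _ _, if_pos hmem]
  have key : ∀ p : Fin (m + 1) × Fin (m + 1),
      (Y p.2 - Y p.1) ^ 2 + (if p = (u, v) then 4 * (Y u * Y v) else 0)
        ≤ (x p.1 + x p.2) ^ 2 := by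
    intro p
    have e1 : Y p.1 ^ 2 = x p.1 ^ 2 := by rw [← hx, sq_abs]
    have e2 : Y p.2 ^ 2 = x p.2 ^ 2 := by rw [← hx, sq_abs]
    have e3 : Y p.1 * Y p.2 = |x p.1 * x p.2| := by rw [abs_mul, hx, hx]
    split_ifs with h
    · subst h
      simp only at e1 e2 e3 ⊢
      rw [abs_of_nonneg hsign] at e3
      nlinarith
    · have := neg_abs_le (x p.1 * x p.2)
      nlinarith
  have hle : ∀ p ∈ ordEdges G, wt Y p.1 p.2 + (if p = (u, v) then 4 * (Y u * Y v) else 0)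
      ≤ (x p.1 + x p.2) ^ 2 := by
    intro p hp
    have h1 : p.1.val ≤ p.2.val := (mem_ordEdges.1 hp).1.le
    have := wt_le hY h1
    linarith [key p]
  refine ⟨(hcount.trans hsum.ge).trans (Finset.sum_le_sum hle), ?_⟩
  rintro hpos ⟨p, hp, h1, h2⟩
  refine (hcount.trans hsum.ge).trans_lt (Finset.sum_lt_sum hle ⟨p, hp, ?_⟩)
  have := wt_lt hY hpos h1 (by have := p.2.isLt; omega) h2
  linarith [key p]

/-! ### The lollipop graph -/

/-- triangle `0,1,2` with the path `2,3,...,m` -/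
def lolli (m : ℕ) : SimpleGraph (Fin (m + 1)) where
  Adj i j := i.val + 1 = j.val ∨ j.val + 1 = i.val ∨ (i.val = 0 ∧ j.val = 2) ∨
    (j.val = 0 ∧ i.val = 2)
  symm := ⟨fun i j h => by omega⟩
  loopless := ⟨fun i h => by omega⟩

/-- signs -/
noncomputable def sg (k : ℕ) : ℝ := if k = 0 then 1 else (-1) ^ (k + 1)

lemma sg_sq (k : ℕ) : sg k * sg k = 1 := by
  unfold sg
  split_ifs
  · norm_num
  · rw [← mul_pow]; norm_num

lemma sg_succ {k : ℕ} (hk : 1 ≤ k) : sg (k + 1) = - sg k := by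
  unfold sg
  rw [if_neg (by omega), if_neg (by omega), pow_succ]
  ring

lemma lolli_energy {m : ℕ} (hm : 3 ≤ m) (Y : ℕ → ℝ) :
    ∑ p ∈ ordEdges (lolli m), (sg p.1 * Y p.1 + sg p.2 * Y p.2) ^ 2 = lolE m Y := by
  have hP : ordEdges (lolli m) = insert ((⟨0, by omega⟩, ⟨2, by omega⟩) : Fin (m + 1) × Fin (m + 1))
      (Finset.univ.image fun k : Fin m => (k.castSucc, k.succ)) := by
    ext ⟨a, b⟩
    simp only [mem_ordEdges, lolli, Finset.mem_insert, Finset.mem_image, Finset.mem_univ, true_and,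
      Prod.mk.injEq, Fin.lt_def, Fin.ext_iff, Fin.val_castSucc, Fin.val_succ]
    constructor
    · rintro ⟨h1, h2⟩
      by_cases h : a.val + 1 = b.val
      · exact Or.inr ⟨⟨a.val, by omega⟩, rfl, h⟩
      · left; omega
    · rintro (h | ⟨k, h1, h2⟩) <;> omega
  rw [hP, Finset.sum_insert, Finset.sum_image]
  · simp only [Fin.val_castSucc, Fin.val_succ]
    rw [Fin.sum_univ_eq_sum_range
      (fun k => (sg k * Y k + sg (k + 1) * Y (k + 1)) ^ 2) m, Finset.range_eq_Ico,
      Finset.sum_eq_sum_Ico_succ_bot (by omega : 0 < m)]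
    have : ∀ k ∈ Finset.Ico (0 + 1) m, (sg k * Y k + sg (k + 1) * Y (k + 1)) ^ 2 =
        gap Y k ^ 2 := by
      intro k hk
      have hk := (Finset.mem_Ico.1 hk).1
      rw [sg_succ (by omega)]
      have := sg_sq k
      have e : (sg k * Y k + -sg k * Y (k + 1)) ^ 2 = (sg k * sg k) * gap Y k ^ 2 := by
        simp only [gap]; ring
      rw [e, this, one_mul]
    rw [Finset.sum_congr rfl this]
    have s0 : sg 0 = 1 := by simp [sg]
    have s1 : sg 1 = 1 := by simp [sg]
    have s2 : sg 2 = -1 := by rw [sg_succ le_rfl, s1]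
    simp only [s0, s1, s2, lolE, zero_add]
    ring
  · intro a _ b _ h
    simpa using h
  · simp only [Finset.mem_image, Finset.mem_univ, true_and, Prod.mk.injEq, Fin.ext_iff,
      Fin.val_castSucc, Fin.val_succ]
    rintro ⟨k, h1, h2⟩
    omega

/-- squared norm -/
noncomputable def nrm (m : ℕ) (Y : ℕ → ℝ) : ℝ := ∑ k ∈ Finset.range (m + 1), Y k ^ 2

lemma lolli_rayleigh {m : ℕ} (hm : 3 ≤ m) (Y : ℕ → ℝ) :
    qmin (lolli m) * nrm m Y ≤ lolE m Y := by
  have h := (qmin_spec (lolli m)).2 (fun i => sg i * Y i)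
  rw [qform_ord, lolli_energy hm] at h
  have : (fun i : Fin (m + 1) => sg i * Y i) ⬝ᵥ (fun i : Fin (m + 1) => sg i * Y i) = nrm m Y := by
    simp only [dotProduct, nrm]
    rw [Fin.sum_univ_eq_sum_range (fun k => sg k * Y k * (sg k * Y k)) (m + 1)]
    refine Finset.sum_congr rfl fun k _ => ?_
    have := sg_sq k
    have e : sg k * Y k * (sg k * Y k) = (sg k * sg k) * Y k ^ 2 := by ring
    rw [e, this, one_mul]
  rwa [this] at h

lemma lin_zero {A B : ℝ} (h : ∀ e : ℝ, 0 ≤ e * A + e ^ 2 * B) : A = 0 := by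
  by_contra hA
  have hB : 0 ≤ B := by
    have h1 := h 1
    have h2 := h (-1)
    nlinarith
  have h3 := h (-A / (B + 1))
  have h4 : -A / (B + 1) * A + (-A / (B + 1)) ^ 2 * B = -(A ^ 2 / (B + 1) ^ 2) := by
    field_simp
    ring
  rw [h4] at h3
  have : 0 < A ^ 2 / (B + 1) ^ 2 := by positivity
  linarith

/-- a nonnegative monotone minimizer for the lollipop has positive gaps -/
lemma lolli_gaps {m : ℕ} (hm : 3 ≤ m) {Y : ℕ → ℝ} (hY : Monotone Y) (hY0 : 0 ≤ Y 0)
    (hYm : 0 < Y m) (heq : lolE m Y = qmin (lolli m) * nrm m Y) :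
    ∀ k, 1 ≤ k → k < m → 0 < gap Y k := by
  set q := qmin (lolli m) with hq
  have hmin : ∀ Z, q * nrm m Z ≤ lolE m Z := lolli_rayleigh hm
  have hYn : ∀ k, 0 ≤ Y k := fun k => hY0.trans (hY (Nat.zero_le k))
  have hqpos : 0 < q := by
    by_contra hq0
    push Not at hq0
    have hn : 0 ≤ nrm m Y := Finset.sum_nonneg fun _ _ => sq_nonneg _
    have hE : lolE m Y ≤ 0 := heq ▸ mul_nonpos_of_nonpos_of_nonneg hq0 hn
    have hs : ∀ k ∈ Finset.Ico 1 m, 0 ≤ gap Y k ^ 2 := fun _ _ => sq_nonneg _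
    have hS := Finset.sum_nonneg hs
    unfold lolE at hE
    have h1 : (Y 0 + Y 1) ^ 2 = 0 :=
      le_antisymm (by linarith [sq_nonneg (Y 2 - Y 0)]) (sq_nonneg _)
    have h3 : ∑ k ∈ Finset.Ico 1 m, gap Y k ^ 2 = 0 :=
      le_antisymm (by linarith [sq_nonneg (Y 2 - Y 0), sq_nonneg (Y 0 + Y 1)]) hS
    rw [Finset.sum_eq_zero_iff_of_nonneg hs] at h3
    have h4 : Y 0 + Y 1 = 0 := by simpa using h1
    have h5 : ∀ k, 1 ≤ k → k ≤ m → Y k = 0 := by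
      intro k hk
      induction k, hk using Nat.le_induction with
      | base => intro _; linarith [hYn 0, hYn 1]
      | succ k hk ih =>
        intro hkm
        have := h3 k (Finset.mem_Ico.2 ⟨hk, by omega⟩)
        have h6 : gap Y k = 0 := by simpa using this
        have h7 := ih (by omega)
        simp only [gap] at h6
        linarith
    exact hYm.ne' (h5 m (by omega) le_rfl)
  -- first variation
  have hvar : ∀ d : ℕ → ℝ,
      2 * ((Y 0 + Y 1) * (d 0 + d 1) + (Y 2 - Y 0) * (d 2 - d 0)
        + ∑ k ∈ Finset.Ico 1 m, gap Y k * gap d k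
        - q * ∑ k ∈ Finset.range (m + 1), Y k * d k) = 0 := by
    intro d
    apply lin_zero (B := lolE m d - q * nrm m d)
    intro e
    have h := hmin (fun k => Y k + e * d k)
    have h1 : lolE m (fun k => Y k + e * d k) = lolE m Y + e * (2 * ((Y 0 + Y 1) * (d 0 + d 1)
        + (Y 2 - Y 0) * (d 2 - d 0) + ∑ k ∈ Finset.Ico 1 m, gap Y k * gap d k))
        + e ^ 2 * lolE m d := by
      have : ∑ k ∈ Finset.Ico 1 m, gap (fun k => Y k + e * d k) k ^ 2 =
          ∑ k ∈ Finset.Ico 1 m, gap Y k ^ 2 + e * (2 * ∑ k ∈ Finset.Ico 1 m, gap Y k * gap d k)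
          + e ^ 2 * ∑ k ∈ Finset.Ico 1 m, gap d k ^ 2 := by
        simp only [Finset.mul_sum, ← Finset.sum_add_distrib]
        refine Finset.sum_congr rfl fun k _ => ?_
        simp only [gap]
        ring
      unfold lolE
      rw [this]
      ring
    have h2 : nrm m (fun k => Y k + e * d k) = nrm m Y
        + e * (2 * ∑ k ∈ Finset.range (m + 1), Y k * d k) + e ^ 2 * nrm m d := by
      unfold nrm
      simp only [Finset.mul_sum, ← Finset.sum_add_distrib]
      refine Finset.sum_congr rfl fun k _ => ?_
      ring
    rw [h1, h2] at h
    nlinarith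
  intro k hk1 hkm
  refine lt_of_le_of_ne (gap_nonneg hY k) fun hzero => ?_
  rcases Nat.lt_or_ge 1 k with hk2 | hk2
  · have h := hvar (fun j => if k < j then 1 else 0)
    have h1 : ∑ j ∈ Finset.Ico 1 m, gap Y j * gap (fun j => if k < j then (1 : ℝ) else 0) j = 0 := by
      apply Finset.sum_eq_zero
      intro j _
      by_cases hj : j = k
      · rw [hj, ← hzero, zero_mul]
      · have : gap (fun j => if k < j then (1 : ℝ) else 0) j = 0 := by
          simp only [gap]
          by_cases h : k < j
          · rw [if_pos h, if_pos (by omega)]; ring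
          · rw [if_neg h, if_neg (by omega)]; ring
        rw [this, mul_zero]
    have h2 : Y m ≤ ∑ j ∈ Finset.range (m + 1), Y j * (if k < j then 1 else 0) := by
      have := Finset.single_le_sum (f := fun j => Y j * (if k < j then (1 : ℝ) else 0))
        (s := Finset.range (m + 1)) (fun j _ => mul_nonneg (hYn j) (by split_ifs <;> norm_num))
        (Finset.self_mem_range_succ m)
      simpa [hkm] using this
    rw [h1] at h
    simp only [if_neg (show ¬ k < 0 by omega), if_neg (show ¬ k < 1 by omega),
      if_neg (show ¬ k < 2 by omega)] at h
    have := mul_pos hqpos (hYm.trans_le h2)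
    linarith
  · obtain rfl : k = 1 := by omega
    have hY12 : Y 2 = Y 1 := by
      simp only [gap] at hzero
      linarith
    let d : ℕ → ℝ := fun j => if j = 0 then 0 else if j = 1 then -1 else 1
    have h := hvar d
    have h1 : ∑ j ∈ Finset.Ico 1 m, gap Y j * gap d j = 0 := by
      apply Finset.sum_eq_zero
      intro j hj
      have hj1 := (Finset.mem_Ico.1 hj).1
      by_cases hj : j = 1
      · rw [hj, ← hzero, zero_mul]
      · have : gap d j = 0 := by
          simp only [gap, d]
          rw [if_neg (by omega), if_neg (by omega), if_neg (by omega), if_neg hj]; ring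
        rw [this, mul_zero]
    have h2 : Y m ≤ ∑ j ∈ Finset.range (m + 1), Y j * d j := by
      have hsub : ∑ j ∈ insert m (Finset.range 3), Y j * d j ≤
          ∑ j ∈ Finset.range (m + 1), Y j * d j := by
        apply Finset.sum_le_sum_of_subset_of_nonneg
        · intro j hj
          simp only [Finset.mem_insert, Finset.mem_range] at hj ⊢
          omega
        · intro j _ hj
          simp only [Finset.mem_insert, Finset.mem_range, not_or, not_lt] at hj
          have : d j = 1 := by
            simp only [d]
            rw [if_neg (by omega), if_neg (by omega)]
          rw [this, mul_one]
          exact hYn j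
      have hdm : d m = 1 := by
        simp only [d]
        rw [if_neg (by omega), if_neg (by omega)]
      refine le_trans ?_ hsub
      rw [Finset.sum_insert (by simp; omega), hdm]
      simp only [Finset.sum_range_succ, Finset.sum_range_zero]
      have d0 : d 0 = 0 := by simp [d]
      have d1 : d 1 = -1 := by simp [d]
      have d2 : d 2 = 1 := by simp [d]
      rw [d0, d1, d2]
      linarith
    have d0 : d 0 = 0 := by simp [d]
    have d1 : d 1 = -1 := by simp [d]
    have d2 : d 2 = 1 := by simp [d]
    rw [h1, d0, d1, d2] at h
    have := mul_pos hqpos (hYm.trans_le h2)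
    linarith

lemma eq_lolli {m : ℕ} (hm : 3 ≤ m) {G : SimpleGraph (Fin (m + 1))} {u v : Fin (m + 1)}
    (huv : u < v) (hadj : G.Adj u v) (hc : (G.deleteEdges {s(u, v)}).Connected)
    (hle : ∀ p ∈ ordEdges G, ¬ (p.1.val + 2 ≤ p.2.val ∧ ¬ (p.1.val = 0 ∧ p.2.val = 2))) :
    G = lolli m := by
  have hle' : ∀ a b : Fin (m + 1), a.val < b.val → G.Adj a b →
      b.val = a.val + 1 ∨ (a.val = 0 ∧ b.val = 2) := by
    intro a b hab h
    have := hle (a, b) (mem_ordEdges.2 ⟨hab, h⟩)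
    simp only at this
    omega
  have hdel : ∀ {a b}, (G.deleteEdges {s(u, v)}).Adj a b →
      G.Adj a b ∧ ¬ (a = u ∧ b = v) ∧ ¬ (a = v ∧ b = u) := by
    intro a b h
    rw [SimpleGraph.deleteEdges_adj] at h
    refine ⟨h.1, ?_, ?_⟩
    · rintro ⟨rfl, rfl⟩
      simp at h
    · rintro ⟨rfl, rfl⟩
      simp [Sym2.eq_swap] at h
  -- adjacency as a predicate on numbers
  let A : ℕ → ℕ → Prop := fun i j => ∃ (hi : i < m + 1) (hj : j < m + 1), G.Adj ⟨i, hi⟩ ⟨j, hj⟩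
  have toA : ∀ {a b : Fin (m + 1)}, G.Adj a b → ∀ {i j : ℕ}, a.val = i → b.val = j → A i j := by
    rintro a b h i j rfl rfl
    exact ⟨a.isLt, b.isLt, h⟩
  have Asymm : ∀ {i j}, A i j → A j i := fun ⟨h1, h2, h3⟩ => ⟨h2, h1, h3.symm⟩
  have huv' : u.val < v.val := huv
  have hcr : ∀ k < m, ∃ a b : Fin (m + 1), a.val ≤ k ∧ k < b.val ∧ G.Adj a b ∧
      ¬ (a.val = u.val ∧ b.val = v.val) := by
    intro k hk
    obtain ⟨a, b, h1, h2, h3⟩ := exists_cross_level hc hk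
    obtain ⟨h4, h5, h6⟩ := hdel h3
    exact ⟨a, b, h1, h2, h4, fun h => h5 ⟨Fin.ext h.1, Fin.ext h.2⟩⟩
  have hpath : ∀ k, 2 ≤ k → k < m → A k (k + 1) := by
    intro k hk hkm
    obtain ⟨a, b, h1, h2, h3, -⟩ := hcr k hkm
    have := hle' a b (by omega) h3
    exact toA h3 (by omega) (by omega)
  have huvle := hle' u v huv' hadj
  have hu : u.val < 2 := by
    by_contra hu
    obtain ⟨a, b, h1, h2, h3, h4⟩ := hcr u.val (by have := v.isLt; omega)
    have := hle' a b (by omega) h3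
    omega
  have htri : A 0 1 ∧ A 0 2 ∧ A 1 2 := by
    obtain ⟨a0, b0, p1, p2, p3, p4⟩ := hcr 0 (by omega)
    obtain ⟨a1, b1, q1, q2, q3, q4⟩ := hcr 1 (by omega)
    have hp := hle' a0 b0 (by omega) p3
    have hq := hle' a1 b1 (by omega) q3
    have hu01 : u.val = 0 ∨ u.val = 1 := by omega
    rcases hu01 with hu0 | hu1
    · rcases huvle with hv | hv
      · -- uv = 01
        have k1 : A 0 1 := toA hadj hu0 (by omega)
        have k2 : A 0 2 := toA p3 (by omega) (by omega)
        obtain ⟨s, hs⟩ := exists_nbr (by omega) hc v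
        obtain ⟨h4, h5, h6⟩ := hdel hs
        have hs0 : s.val ≠ 0 := fun h => h6 ⟨rfl, Fin.ext (by omega)⟩
        have hs1 : s.val ≠ 1 := fun h => h4.ne (Fin.ext (by omega))
        have := hle' v s (by omega) h4
        exact ⟨k1, k2, toA h4 (by omega) (by omega)⟩
      · -- uv = 02
        exact ⟨toA p3 (by omega) (by omega), toA hadj (by omega) (by omega),
          toA q3 (by omega) (by omega)⟩
    · -- uv = 12
      have hv : v.val = 2 := by omega
      have k2 : A 0 2 := toA q3 (by omega) (by omega)
      obtain ⟨s, hs⟩ := exists_nbr (by omega) hc u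
      obtain ⟨h4, h5, h6⟩ := hdel hs
      have hs2 : s.val ≠ 2 := fun h => h5 ⟨rfl, Fin.ext (by omega)⟩
      have hs1 : s.val ≠ 1 := fun h => h4.ne (Fin.ext (by omega))
      have hs0 : s.val = 0 := by
        by_contra h
        have := hle' u s (by omega) h4
        omega
      exact ⟨Asymm (toA h4 hu1 hs0), k2, toA hadj (by omega) (by omega)⟩
  have hstep : ∀ k, k < m → A k (k + 1) := by
    intro k hk
    rcases Nat.lt_or_ge k 2 with h | h
    · interval_cases k
      · exact htri.1
      · exact htri.2.2
    · exact hpath k h hk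
  have fromA : ∀ {a b : Fin (m + 1)}, A a.val b.val → G.Adj a b := fun ⟨_, _, h⟩ => h
  ext a b
  constructor
  · intro h
    show a.val + 1 = b.val ∨ b.val + 1 = a.val ∨ (a.val = 0 ∧ b.val = 2) ∨
      (b.val = 0 ∧ a.val = 2)
    have hne : a.val ≠ b.val := fun h' => h.ne (Fin.ext h')
    rcases Nat.lt_or_gt_of_ne hne with h1 | h1
    · have := hle' a b h1 h
      omega
    · have := hle' b a h1 h.symm
      omega
  · rintro (h | h | ⟨h1, h2⟩ | ⟨h1, h2⟩)
    · exact fromA (h ▸ hstep a.val (by omega))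
    · exact fromA (h ▸ Asymm (hstep b.val (by omega)))
    · exact fromA (by rw [h1, h2]; exact htri.2.1)
    · exact fromA (by rw [h1, h2]; exact Asymm htri.2.1)

lemma main_fin {m : ℕ} (hm : 3 ≤ m) (G : SimpleGraph (Fin (m + 1))) (hc : G.Connected)
    (hnb : ¬ G.Colorable 2) (x : Fin (m + 1) → ℝ) (hx0 : x ≠ 0)
    (hx : x ⬝ᵥ (signlessLaplacian G).mulVec x = qmin G * (x ⬝ᵥ x))
    (hmono : Monotone fun i => |x i|) :
    qmin (lolli m) ≤ qmin G ∧ (qmin (lolli m) = qmin G → G = lolli m) := by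
  let Y : ℕ → ℝ := fun k => |x ⟨min k m, by omega⟩|
  have hY : Monotone Y := fun a b hab => hmono (Fin.mk_le_mk.2 (by omega))
  have hY0 : 0 ≤ Y 0 := abs_nonneg _
  have hxY : ∀ i : Fin (m + 1), |x i| = Y i := by
    intro i
    have : (⟨min i.val m, by omega⟩ : Fin (m + 1)) = i := Fin.ext (by simp; omega)
    simp only [Y, this]
  have hnrm : x ⬝ᵥ x = nrm m Y := by
    simp only [dotProduct, nrm]
    rw [← Fin.sum_univ_eq_sum_range (fun k => Y k ^ 2) (m + 1)]
    refine Finset.sum_congr rfl fun i _ => ?_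
    rw [← hxY, sq_abs, sq]
  have hpos : 0 < nrm m Y := hnrm ▸ dot_self_pos hx0
  have hYm : 0 < Y m := by
    by_contra h
    push Not at h
    apply hx0
    funext i
    have h1 : Y i ≤ Y m := hY (by omega)
    have h2 := hxY i
    have h3 := abs_nonneg (x i)
    exact abs_eq_zero.1 (by linarith)
  obtain ⟨u, v, hadj, hs, hsgn, hconn⟩ : ∃ u v, u < v ∧ G.Adj u v ∧ 0 ≤ x u * x v ∧
      (G.deleteEdges {s(u, v)}).Connected := by
    obtain ⟨u, v, h1, h2, h3⟩ := exists_nonbridge G hc hnb x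
    rcases lt_or_gt_of_ne h1.ne with h | h
    · exact ⟨u, v, h, h1, h2, h3⟩
    · exact ⟨v, u, h, h1.symm, by rwa [mul_comm], by rwa [Sym2.eq_swap]⟩
  obtain ⟨hb1, hb2⟩ := energy_bound hm G hadj hs hconn hY hY0 x hxY hsgn
  rw [qform_ord, hnrm] at hx
  have hr := lolli_rayleigh hm Y
  refine ⟨le_of_mul_le_mul_right (hr.trans (hb1.trans hx.le)) hpos, ?_⟩
  intro heq
  have hE : lolE m Y = qmin (lolli m) * nrm m Y :=
    le_antisymm (by rw [heq, ← hx]; exact hb1) hr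
  have hgaps := lolli_gaps hm hY hY0 hYm hE
  apply eq_lolli hm hadj hs hconn
  intro p hp hbad
  have := hb2 hgaps ⟨p, hp, hbad⟩
  rw [hx, ← heq, hE] at this
  exact lt_irrefl _ this

lemma cstarRel_iff {m : ℕ} (hm : 3 ≤ m) {a b : ℕ} (hb : b < m + 1) :
    cstarRel 3 (m + 1 - 4) a b ↔ (a = 0 ∧ b = 1) ∨ (a = 1 ∧ b = 2) ∨ (a = 0 ∧ b = 2) ∨
      (a = 0 ∧ b = 3) ∨ (3 ≤ a ∧ b = a + 1) := by
  unfold cstarRel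
  by_cases hm3 : m = 3
  · subst hm3
    simp only [Nat.reduceAdd, Nat.sub_self, if_true]
    omega
  · rw [if_neg (show ¬ (m + 1 - 4 = 0) by omega)]
    omega

/-- the lollipop is `C*_{3,n-4}` -/
lemma lolli_iso {m : ℕ} (hm : 3 ≤ m) : Nonempty (lolli m ≃g Cstar (m + 1) 3 (m + 1 - 4)) := by
  refine ⟨⟨Equiv.swap ⟨0, by omega⟩ ⟨2, by omega⟩, ?_⟩⟩
  intro a b
  have hval : ∀ a : Fin (m + 1),
      (a.val = 0 ∧ ((Equiv.swap (⟨0, by omega⟩ : Fin (m + 1)) ⟨2, by omega⟩) a).val = 2) ∨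
      (a.val = 2 ∧ ((Equiv.swap (⟨0, by omega⟩ : Fin (m + 1)) ⟨2, by omega⟩) a).val = 0) ∨
      (a.val ≠ 0 ∧ a.val ≠ 2 ∧
        ((Equiv.swap (⟨0, by omega⟩ : Fin (m + 1)) ⟨2, by omega⟩) a).val = a.val) := by
    intro a
    rw [Equiv.swap_apply_def]
    simp only [Fin.ext_iff]
    split_ifs with h1 h2
    · exact Or.inl ⟨h1, rfl⟩
    · exact Or.inr (Or.inl ⟨h2, rfl⟩)
    · exact Or.inr (Or.inr ⟨h1, h2, rfl⟩)
  have ha := hval a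
  have hb := hval b
  have ha' := a.isLt
  have hb' := b.isLt
  simp only [Cstar, SimpleGraph.fromRel_adj]
  rw [cstarRel_iff hm (Fin.isLt _), cstarRel_iff hm (Fin.isLt _), Ne, Fin.ext_iff]
  simp only [lolli]
  generalize ((Equiv.swap (⟨0, by omega⟩ : Fin (m + 1)) ⟨2, by omega⟩) a).val = a' at ha ⊢
  generalize ((Equiv.swap (⟨0, by omega⟩ : Fin (m + 1)) ⟨2, by omega⟩) b).val = b' at hb ⊢
  generalize a.val = i at *
  generalize b.val = j at *
  rcases ha with ⟨rfl, rfl⟩ | ⟨rfl, rfl⟩ | ⟨h1, h2, rfl⟩ <;>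
  rcases hb with ⟨rfl, rfl⟩ | ⟨rfl, rfl⟩ | ⟨h3, h4, rfl⟩ <;> omega

/-- For `n ∈ {3γ-1, 3γ, 3γ+1}` (`γ ≥ 1`, `n ≥ 4`), among all connected nonbipartite
graphs of order `n` with domination number `γ`, the least `Q`-eigenvalue is minimized
uniquely by `C*_{3,n-4}`. -/
theorem qmin_Cstar_min_small
    {V : Type*} [Fintype V] (γ n : ℕ) (hγ : 1 ≤ γ) (hn4 : 4 ≤ n)
    (hn : n = 3 * γ - 1 ∨ n = 3 * γ ∨ n = 3 * γ + 1)
    (G : SimpleGraph V) (hcard : Fintype.card V = n)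
    (hconn : G.Connected) (hnonbip : ¬ G.Colorable 2)
    (hdom : dominationNumber G = γ) :
    qmin (Cstar n 3 (n - 4)) ≤ qmin G ∧
      (qmin (Cstar n 3 (n - 4)) = qmin G ↔ Nonempty (G ≃g Cstar n 3 (n - 4))) := by
  obtain ⟨m, rfl⟩ : ∃ m, n = m + 1 := ⟨n - 1, by omega⟩
  have hm : 3 ≤ m := by omega
  have hV : Nonempty V := hconn.nonempty
  obtain ⟨x, hx0, hx⟩ := (qmin_spec G).1
  let e0 : Fin (m + 1) ≃ V := (Fintype.equivFinOfCardEq hcard).symm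
  let σ := Tuple.sort (fun i => |x (e0 i)|)
  let e : Fin (m + 1) ≃ V := σ.trans e0
  let G' : SimpleGraph (Fin (m + 1)) := G.comap e
  let f : G' ≃g G := SimpleGraph.Iso.comap e G
  have hq : qmin G' = qmin G := qmin_iso f
  have hmono : Monotone fun i => |(x ∘ f) i| := Tuple.monotone_sort (fun i => |x (e0 i)|)
  have hne : x ∘ f ≠ 0 := by
    intro h
    apply hx0
    funext v
    have := congrFun h (f.symm v)
    simpa using this
  have hdot : (x ∘ f) ⬝ᵥ (x ∘ f) = x ⬝ᵥ x := dot_iso e x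
  have hxf : (x ∘ f) ⬝ᵥ (signlessLaplacian G').mulVec (x ∘ f)
      = qmin G' * ((x ∘ f) ⬝ᵥ (x ∘ f)) := by
    rw [qform_iso f, hdot, hq, hx]
  have hconn' : G'.Connected := f.connected_iff.2 hconn
  have hnb' : ¬ G'.Colorable 2 := fun h => hnonbip (h.of_hom f.symm.toHom)
  obtain ⟨h1, h2⟩ := main_fin hm G' hconn' hnb' (x ∘ f) hne hxf hmono
  obtain ⟨g⟩ := lolli_iso hm
  have hql := qmin_iso g
  rw [← hql, ← hq]
  refine ⟨h1, fun h => ?_, fun ⟨k⟩ => ?_⟩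
  · have h3 := h2 h
    have f' : lolli m ≃g G := h3 ▸ f
    exact ⟨f'.symm.trans g⟩
  · rw [hql, hq]
    exact (qmin_iso k).symm
end

section
/- Let k ≥ 1 and l ≥ 0 be integers, let t = l + k − 1, and let both C*_{2k+1,l} and C*_{3,t} be defined and have order n (so n ≥ 2k + 1 + l). Then q_min(C*_{3,t}) ≤ q_min(C*_{2k+1,l}), with equality if and only if k = 1. -/
open scoped Classical

open Finset in
theorem aux_qmin_min {n : ℕ} (hn : 0 < n) (M : Matrix (Fin n) (Fin n) ℝ) (hM : M.IsHermitian) :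
    (∃ x : Fin n → ℝ, x ≠ 0 ∧
      M.mulVec x = (sInf {μ : ℝ | ∃ x : Fin n → ℝ, x ≠ 0 ∧ M.mulVec x = μ • x}) • x) ∧
    ∀ x : Fin n → ℝ, (sInf {μ : ℝ | ∃ x : Fin n → ℝ, x ≠ 0 ∧ M.mulVec x = μ • x}) *
      (dotProduct x x) ≤ dotProduct x (M.mulVec x) := by
  set S := {μ : ℝ | ∃ x : Fin n → ℝ, x ≠ 0 ∧ M.mulVec x = μ • x} with hS
  have hfin : S.Finite := by
    refine (Module.End.finite_hasEigenvalue (Matrix.toLin' M)).subset ?_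
    rintro μ ⟨x, hx, hxe⟩
    refine Module.End.hasEigenvalue_of_hasEigenvector (x := x) ⟨?_, hx⟩
    rw [Module.End.mem_eigenspace_iff, Matrix.toLin'_apply, hxe]
  have hbasis : ∀ (A : Matrix (Fin n) (Fin n) ℝ) (hA : A.IsHermitian) (j : Fin n),
      (hA.eigenvectorBasis j).ofLp ≠ 0 := by
    intro A hA j h
    have := hA.eigenvectorBasis.orthonormal.ne_zero j
    exact this (by ext i; exact congrFun h i)
  have hne : S.Nonempty :=
    ⟨hM.eigenvalues ⟨0, hn⟩, _, hbasis M hM _, hM.mulVec_eigenvectorBasis _⟩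
  refine ⟨hne.csInf_mem hfin, ?_⟩
  intro x
  set q := sInf S
  have hN : (M - q • (1 : Matrix (Fin n) (Fin n) ℝ)).IsHermitian := by
    refine hM.sub ?_
    unfold Matrix.IsHermitian
    simp
  have hpsd : (M - q • (1 : Matrix (Fin n) (Fin n) ℝ)).PosSemidef := by
    rw [hN.posSemidef_iff_eigenvalues_nonneg]
    intro j
    have h1 := hN.mulVec_eigenvectorBasis j
    have h2 : hN.eigenvalues j + q ∈ S := by
      refine ⟨_, hbasis _ hN j, ?_⟩
      rw [Matrix.sub_mulVec, Matrix.smul_mulVec, Matrix.one_mulVec] at h1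
      rw [add_smul, ← h1]
      simp
    have := csInf_le hfin.bddBelow h2
    show (0:ℝ) ≤ _
    linarith
  have := hpsd.dotProduct_mulVec_nonneg x
  rw [Matrix.sub_mulVec, Matrix.smul_mulVec, Matrix.one_mulVec, dotProduct_sub, dotProduct_smul] at this
  simp at this
  linarith

theorem aux_herm {n : ℕ} (G : SimpleGraph (Fin n)) : (signlessLaplacian G).IsHermitian := by
  ext i j
  simp [signlessLaplacian, G.adj_comm]
  by_cases h : i = j
  · subst h; simp
  · rw [if_neg h, if_neg (Ne.symm h)]

theorem aux_quad {n : ℕ} (R : ℕ → ℕ → Prop) (hR : ∀ a b, R a b → a < b) (X : ℕ → ℝ) :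
    dotProduct (fun i : Fin n => X i)
      ((signlessLaplacian (SimpleGraph.fromRel (fun i j : Fin n => R i.val j.val))).mulVec
        (fun i : Fin n => X i)) =
    ∑ b ∈ Finset.range n, ∑ a ∈ Finset.range n, if R a b then (X a + X b) ^ 2 else 0 := by
  obtain ⟨G, hG⟩ : ∃ G, G = SimpleGraph.fromRel (fun i j : Fin n => R i.val j.val) := ⟨_, rfl⟩
  rw [← hG]
  have hind : ∀ i j : Fin n, (if G.Adj i j then (1:ℝ) else 0) =
      (if R i j then 1 else 0) + (if R j i then 1 else 0) := by
    intro i j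
    have : G.Adj i j ↔ (R i j ∨ R j i) := by
      rw [hG, SimpleGraph.fromRel_adj]
      constructor
      · exact fun h => h.2
      · intro h
        refine ⟨?_, h⟩
        rintro rfl
        rcases h with h | h <;> exact absurd (hR _ _ h) (lt_irrefl _)
    by_cases h1 : R i j <;> by_cases h2 : R j i
    · have := hR _ _ h1; have := hR _ _ h2; omega
    · simp [this, h1, h2]
    · simp [this, h1, h2]
    · simp [this, h1, h2]
  have hdeg : ∀ i : Fin n, (G.degree i : ℝ) = ∑ j : Fin n, (if G.Adj i j then (1:ℝ) else 0) := by
    intro i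
    rw [← SimpleGraph.card_neighborFinset_eq_degree, Finset.sum_boole]
    congr 2
    ext j
    simp
  have h1 : ∀ i : Fin n, (signlessLaplacian G).mulVec (fun i : Fin n => X i) i =
      ∑ j : Fin n, (if G.Adj i j then (1:ℝ) else 0) * (X i + X j) := by
    intro i
    simp only [Matrix.mulVec, dotProduct, signlessLaplacian, add_mul, mul_add,
      Finset.sum_add_distrib]
    congr 1
    rw [← Finset.sum_mul, ← hdeg]
    simp
  have h2 : ∀ f : ℕ → ℕ → ℝ, ∑ b ∈ Finset.range n, ∑ a ∈ Finset.range n, f a b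
      = ∑ b : Fin n, ∑ a : Fin n, f a b := by
    intro f
    rw [← Fin.sum_univ_eq_sum_range (fun b => ∑ a ∈ Finset.range n, f a b)]
    refine Finset.sum_congr rfl fun b _ => ?_
    rw [← Fin.sum_univ_eq_sum_range (fun a => f a b)]
  rw [h2 (fun a b => if R a b then (X a + X b) ^ 2 else 0)]
  simp only [dotProduct, h1, Finset.mul_sum, hind, add_mul, mul_add, Finset.sum_add_distrib]
  have e1 : ∑ i : Fin n, ∑ j : Fin n, X i * ((if R j i then (1:ℝ) else 0) * X i) =
      ∑ b : Fin n, ∑ a : Fin n, (if R a b then 1 else 0) * X b ^ 2 :=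
    Finset.sum_congr rfl fun b _ => Finset.sum_congr rfl fun a _ => by ring
  have e2 : ∑ i : Fin n, ∑ j : Fin n, X i * ((if R j i then (1:ℝ) else 0) * X j) =
      ∑ b : Fin n, ∑ a : Fin n, (if R a b then 1 else 0) * (X a * X b) :=
    Finset.sum_congr rfl fun b _ => Finset.sum_congr rfl fun a _ => by ring
  have e3 : ∑ i : Fin n, ∑ j : Fin n, X i * ((if R i j then (1:ℝ) else 0) * X i) =
      ∑ b : Fin n, ∑ a : Fin n, (if R a b then 1 else 0) * X a ^ 2 := by
    rw [Finset.sum_comm]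
    exact Finset.sum_congr rfl fun b _ => Finset.sum_congr rfl fun a _ => by ring
  have e4 : ∑ i : Fin n, ∑ j : Fin n, X i * ((if R i j then (1:ℝ) else 0) * X j) =
      ∑ b : Fin n, ∑ a : Fin n, (if R a b then 1 else 0) * (X a * X b) := by
    rw [Finset.sum_comm]
    exact Finset.sum_congr rfl fun b _ => Finset.sum_congr rfl fun a _ => by ring
  rw [e1, e2, e3, e4]
  simp only [← Finset.sum_add_distrib]
  refine Finset.sum_congr rfl fun b _ => Finset.sum_congr rfl fun a _ => ?_
  split_ifs <;> ring

/-- numerator of the Rayleigh quotient -/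
noncomputable def auxN (s l P : ℕ) (c p g : ℕ → ℝ) : ℝ :=
  ∑ i ∈ Finset.range (s - 1), (c i + c (i + 1)) ^ 2 + (c 0 + c (s - 1)) ^ 2 +
    ∑ i ∈ Finset.range l, (p i + p (i + 1)) ^ 2 + ∑ j ∈ Finset.range P, (p l + g j) ^ 2

/-- denominator of the Rayleigh quotient -/
noncomputable def auxD (s l P : ℕ) (c p g : ℕ → ℝ) : ℝ :=
  ∑ i ∈ Finset.range s, c i ^ 2 +
    ∑ i ∈ Finset.range l, p (i + 1) ^ 2 + ∑ j ∈ Finset.range P, g j ^ 2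

theorem aux_rel_lt (r l a b : ℕ) (h : cstarRel (r + 3) l a b) : a < b := by
  unfold cstarRel at h; split_ifs at h <;> omega

theorem aux_quad_cstar (r l P : ℕ) (X : ℕ → ℝ) :
    ∑ b ∈ Finset.range (r + 3 + l + P), ∑ a ∈ Finset.range (r + 3 + l + P),
      (if cstarRel (r + 3) l a b then (X a + X b) ^ 2 else 0) =
    auxN (r + 3) l P X (fun i => if i = 0 then X 0 else X (r + 3 + i - 1))
      (fun j => X (r + 3 + l + j)) := by
  have key : ∀ (b a0 : ℕ), a0 < r + 3 + l + P → (∀ a, cstarRel (r + 3) l a b ↔ a = a0) →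
      ∑ a ∈ Finset.range (r + 3 + l + P),
        (if cstarRel (r + 3) l a b then (X a + X b) ^ 2 else 0) = (X a0 + X b) ^ 2 := by
    intro b a0 h0 h
    simp only [h]
    rw [Finset.sum_ite_eq' (Finset.range (r + 3 + l + P)) a0 (fun a => (X a + X b) ^ 2), if_pos (Finset.mem_range.2 h0)]
  rw [Finset.sum_range_add, Finset.sum_range_add, Finset.sum_range_succ',
    Finset.sum_range_succ _ (r + 1)]
  unfold auxN
  congr 1
  congr 1
  · have h0 : ∑ a ∈ Finset.range (r + 3 + l + P),
        (if cstarRel (r + 3) l a 0 then (X a + X 0) ^ 2 else 0) = 0 := by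
      refine Finset.sum_eq_zero fun a _ => if_neg fun h => ?_
      exact absurd (aux_rel_lt _ _ _ _ h) (Nat.not_lt_zero a)
    have h1 : ∑ a ∈ Finset.range (r + 3 + l + P),
        (if cstarRel (r + 3) l a (r + 1 + 1) then (X a + X (r + 1 + 1)) ^ 2 else 0) =
        (X (r + 1) + X (r + 2)) ^ 2 + (X 0 + X (r + 2)) ^ 2 := by
      have : ∀ a, (if cstarRel (r + 3) l a (r + 1 + 1) then (X a + X (r + 1 + 1)) ^ 2 else 0)
        = (if a = r + 1 then (X a + X (r + 2)) ^ 2 else 0) +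
          (if a = 0 then (X a + X (r + 2)) ^ 2 else 0) := by
        intro a
        have : cstarRel (r + 3) l a (r + 1 + 1) ↔ a = r + 1 ∨ a = 0 := by
          unfold cstarRel; split_ifs <;> omega
        by_cases h1 : a = r + 1
        · subst h1; simp [this]
        · simp [this, h1]
      simp only [this, Finset.sum_add_distrib]
      rw [Finset.sum_ite_eq' _ _ (fun a => (X a + X (r + 2)) ^ 2), Finset.sum_ite_eq' _ _ (fun a => (X a + X (r + 2)) ^ 2), if_pos (by simp; omega), if_pos (by simp)]
    rw [h0, h1]
    show _ = ∑ i ∈ Finset.range (r + 2), (X i + X (i + 1)) ^ 2 + (X 0 + X (r + 2)) ^ 2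
    have : ∑ k ∈ Finset.range (r + 1), ∑ a ∈ Finset.range (r + 3 + l + P),
        (if cstarRel (r + 3) l a (k + 1) then (X a + X (k + 1)) ^ 2 else 0) =
        ∑ i ∈ Finset.range (r + 1), (X i + X (i + 1)) ^ 2 := by
      refine Finset.sum_congr rfl fun i hi => ?_
      have := Finset.mem_range.1 hi
      refine key _ _ (by omega) fun a => ?_
      unfold cstarRel; split_ifs <;> omega
    rw [Finset.sum_range_succ _ (r + 1), ← this]
    ring
  · refine Finset.sum_congr rfl fun i hi => ?_
    have hi := Finset.mem_range.1 hi
    rw [key (r + 3 + i) (if i = 0 then 0 else r + 3 + i - 1) (by split_ifs <;> omega)]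
    · by_cases h : i = 0
      · simp [h]
      · simp [h]
    · intro a
      unfold cstarRel; split_ifs <;> omega
  · refine Finset.sum_congr rfl fun i hi => ?_
    have hi := Finset.mem_range.1 hi
    rw [key (r + 3 + l + i) (if l = 0 then 0 else r + 3 + l - 1) (by split_ifs <;> omega)]
    · by_cases h : l = 0
      · simp [h]
      · simp [h]
    · intro a
      unfold cstarRel; split_ifs <;> omega

theorem aux_dot (r l P : ℕ) (X : ℕ → ℝ) :
    dotProduct (fun i : Fin (r + 3 + l + P) => X i) (fun i : Fin (r + 3 + l + P) => X i) =
    auxD (r + 3) l P X (fun i => if i = 0 then X 0 else X (r + 3 + i - 1))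
      (fun j => X (r + 3 + l + j)) := by
  unfold dotProduct auxD
  rw [Fin.sum_univ_eq_sum_range (fun i => X i * X i), Finset.sum_range_add, Finset.sum_range_add]
  congr 1
  congr 1
  · exact Finset.sum_congr rfl fun i _ => by ring
  · exact Finset.sum_congr rfl fun i _ => by simp; ring_nf
  · exact Finset.sum_congr rfl fun i _ => by ring

theorem aux_lower (r l P : ℕ) (c p g : ℕ → ℝ) (h0 : p 0 = c 0) :
    qmin (Cstar (r + 3 + l + P) (r + 3) l) * auxD (r + 3) l P c p g
      ≤ auxN (r + 3) l P c p g := by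
  set X : ℕ → ℝ := fun i => if i < r + 3 then c i else if i < r + 3 + l then p (i - (r + 3) + 1)
    else g (i - (r + 3 + l)) with hX
  have h := (aux_qmin_min (by omega) _ (aux_herm (Cstar (r + 3 + l + P) (r + 3) l))).2
    (fun i => X i)
  have hq := aux_quad (n := r + 3 + l + P) (cstarRel (r + 3) l) (aux_rel_lt r l) X
  change _ ≤ dotProduct (fun i : Fin (r + 3 + l + P) => X i) ((signlessLaplacian
    (SimpleGraph.fromRel (fun i j : Fin (r + 3 + l + P) => cstarRel (r + 3) l i.val j.val))).mulVec
        (fun i : Fin (r + 3 + l + P) => X i)) at h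
  rw [hq, aux_quad_cstar, aux_dot] at h
  have hp : ∀ i ≤ l, (if i = 0 then X 0 else X (r + 3 + i - 1)) = p i := by
    intro i hi
    rcases i with _ | i
    · simp [hX, h0]
    · simp only [hX]
      rw [if_neg (by omega), if_neg (by omega), if_pos (by omega)]
      congr 1; omega
  have hc : ∀ i < r + 3, X i = c i := by
    intro i hi
    simp only [hX]; rw [if_pos hi]
  have hg : ∀ j, X (r + 3 + l + j) = g j := by
    intro j
    simp only [hX]; rw [if_neg (by omega), if_neg (by omega)]; congr 1; omega
  have eN : auxN (r + 3) l P X (fun i => if i = 0 then X 0 else X (r + 3 + i - 1))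
      (fun j => X (r + 3 + l + j)) = auxN (r + 3) l P c p g := by
    unfold auxN
    simp only [hg]
    rw [hp l le_rfl]
    congr 1
    congr 1
    · rw [hc 0 (by omega), hc (r + 3 - 1) (by omega)]
      congr 1
      refine Finset.sum_congr rfl fun i hi => ?_
      have hi := Finset.mem_range.1 hi
      rw [hc i (by omega), hc (i + 1) (by omega)]
    · refine Finset.sum_congr rfl fun i hi => ?_
      have hi := Finset.mem_range.1 hi
      rw [hp i (by omega), hp (i + 1) (by omega)]
  have eD : auxD (r + 3) l P X (fun i => if i = 0 then X 0 else X (r + 3 + i - 1))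
      (fun j => X (r + 3 + l + j)) = auxD (r + 3) l P c p g := by
    unfold auxD
    simp only [hg]
    congr 1
    congr 1
    · refine Finset.sum_congr rfl fun i hi => ?_
      rw [hc i (Finset.mem_range.1 hi)]
    · refine Finset.sum_congr rfl fun i hi => ?_
      have hi := Finset.mem_range.1 hi
      rw [hp (i + 1) (by omega)]
  rw [eN, eD] at h
  exact h

theorem aux_attained (r l P : ℕ) : ∃ c p g : ℕ → ℝ, p 0 = c 0 ∧ 0 < auxD (r + 3) l P c p g ∧
    auxN (r + 3) l P c p g =
      qmin (Cstar (r + 3 + l + P) (r + 3) l) * auxD (r + 3) l P c p g := by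
  obtain ⟨x, hx, he⟩ :=
    (aux_qmin_min (by omega) _ (aux_herm (Cstar (r + 3 + l + P) (r + 3) l))).1
  set X : ℕ → ℝ := fun i => if h : i < r + 3 + l + P then x ⟨i, h⟩ else 0 with hX
  have hxX : x = fun i : Fin (r + 3 + l + P) => X i := by
    funext i; simp [hX]
  have hq := aux_quad (n := r + 3 + l + P) (cstarRel (r + 3) l) (aux_rel_lt r l) X
  refine ⟨X, fun i => if i = 0 then X 0 else X (r + 3 + i - 1),
      fun j => X (r + 3 + l + j), by simp, ?_, ?_⟩
  · rw [← aux_dot, ← hxX]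
    have h0 : dotProduct x x ≠ 0 := by rwa [Ne, dotProduct_self_eq_zero]
    exact lt_of_le_of_ne (Finset.sum_nonneg fun i _ => mul_self_nonneg _) (Ne.symm h0)
  · rw [← aux_quad_cstar, ← hq, ← aux_dot, ← hxX]
    change dotProduct x ((signlessLaplacian (Cstar (r + 3 + l + P) (r + 3) l)).mulVec x) = _
    rw [he, dotProduct_smul]
    rfl

theorem aux_nonneg (r l P : ℕ) : 0 ≤ qmin (Cstar (r + 3 + l + P) (r + 3) l) := by
  obtain ⟨c, p, g, -, hD, hN⟩ := aux_attained r l P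
  have : 0 ≤ auxN (r + 3) l P c p g := by unfold auxN; positivity
  rw [hN] at this
  exact nonneg_of_mul_nonneg_left this hD

/-- the lower bound hypothesis for the graph with a triangle, in sign-free form -/
def AuxLow (q : ℝ) (t P : ℕ) : Prop :=
  ∀ (w w' : ℝ) (F G : ℕ → ℝ),
    q * (w ^ 2 + w' ^ 2 + ∑ i ∈ Finset.range (t + 1), F i ^ 2 + ∑ j ∈ Finset.range P, G j ^ 2) ≤
      (w + w') ^ 2 + (F 0 - w) ^ 2 + (F 0 - w') ^ 2 +
        ∑ i ∈ Finset.range t, (F i - F (i + 1)) ^ 2 + ∑ j ∈ Finset.range P, (F t - G j) ^ 2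

theorem aux_low (t P : ℕ) : AuxLow (qmin (Cstar (3 + t + P) 3 t)) t P := by
  intro w w' F G
  have h := aux_lower 0 t P (fun i => if i = 0 then F 0 else if i = 1 then -w else -w')
    (fun i => (-1) ^ i * F i) (fun j => -((-1) ^ t * G j)) (by simp)
  have hsq : ∀ i : ℕ, ((-1 : ℝ) ^ i) ^ 2 = 1 := by
    intro i; rw [← pow_mul, mul_comm, pow_mul]; simp
  unfold auxD auxN at h
  simp only [zero_add] at h
  have e1 : ∀ i, ((-1 : ℝ) ^ i * F i + (-1) ^ (i + 1) * F (i + 1)) ^ 2 = (F i - F (i + 1)) ^ 2 := by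
    intro i
    rw [show (-1 : ℝ) ^ i * F i + (-1) ^ (i + 1) * F (i + 1) = (-1) ^ i * (F i - F (i + 1)) by ring,
      mul_pow, hsq, one_mul]
  have e2 : ∀ j, ((-1 : ℝ) ^ t * F t + -((-1) ^ t * G j)) ^ 2 = (F t - G j) ^ 2 := by
    intro i
    rw [show (-1 : ℝ) ^ t * F t + -((-1) ^ t * G i) = (-1) ^ t * (F t - G i) by ring,
      mul_pow, hsq, one_mul]
  have e3 : ∀ i, ((-1 : ℝ) ^ (i + 1) * F (i + 1)) ^ 2 = F (i + 1) ^ 2 := by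
    intro i; rw [mul_pow, hsq, one_mul]
  have e4 : ∀ j, (-((-1 : ℝ) ^ t * G j)) ^ 2 = G j ^ 2 := by
    intro i; rw [neg_sq, mul_pow, hsq, one_mul]
  simp only [e1, e2, e3, e4] at h
  simp [Finset.sum_range_succ] at h
  rw [Finset.sum_range_succ']
  convert h using 1 <;> ring

theorem aux_strict (q : ℝ) (t R : ℕ) (hq0 : 0 ≤ q) (hq : AuxLow q t (R + 1))
    (w w' : ℝ) (F G : ℕ → ℝ) (hw : 0 ≤ w) (hw' : 0 ≤ w') (hwF : w ≤ F 0) (hwF' : w' ≤ F 0)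
    (hF : Monotone F) (hG : ∀ j, 0 ≤ G j) (hGR : G R = F t)
    (hD : 0 < w ^ 2 + w' ^ 2 + ∑ i ∈ Finset.range (t + 1), F i ^ 2 +
      ∑ j ∈ Finset.range (R + 1), G j ^ 2) :
    q * (w ^ 2 + w' ^ 2 + ∑ i ∈ Finset.range (t + 1), F i ^ 2 +
      ∑ j ∈ Finset.range (R + 1), G j ^ 2) <
      (w + w') ^ 2 + (F 0 - w) ^ 2 + (F 0 - w') ^ 2 +
        ∑ i ∈ Finset.range t, (F i - F (i + 1)) ^ 2 +
        ∑ j ∈ Finset.range (R + 1), (F t - G j) ^ 2 := by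
  by_contra hcon
  push Not at hcon
  have hF0 : 0 ≤ F t := le_trans (le_trans hw hwF) (hF (Nat.zero_le t))
  -- perturbation of the last pendant value
  have hpert : ∀ ε : ℝ, q * (2 * ε * F t + ε ^ 2) ≤ ε ^ 2 := by
    intro ε
    have h := hq w w' F (fun j => if j = R then F t + ε else G j)
    have e : ∀ f : ℝ → ℝ, ∑ j ∈ Finset.range R, f (if j = R then F t + ε else G j) =
        ∑ j ∈ Finset.range R, f (G j) := by
      intro f
      refine Finset.sum_congr rfl fun j hj => ?_
      rw [if_neg (Finset.mem_range.1 hj).ne]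
    rw [Finset.sum_range_succ _ R, Finset.sum_range_succ _ R, e (fun x => x ^ 2),
      e (fun x => (F t - x) ^ 2)] at h
    rw [Finset.sum_range_succ _ R, Finset.sum_range_succ _ R, hGR] at hcon
    simp only [if_true] at h
    nlinarith
  have hqM : q * F t = 0 := by
    have h := hpert (q * F t / (1 + q))
    have h1 : 0 < 1 + q := by linarith
    have h2 : q * (2 * (q * F t / (1 + q)) * F t + (q * F t / (1 + q)) ^ 2) -
        (q * F t / (1 + q)) ^ 2 = (q * F t / (1 + q)) ^ 2 * (1 + 3 * q) := by
      field_simp; ring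
    have h3 : (q * F t / (1 + q)) ^ 2 * (1 + 3 * q) ≤ 0 := by linarith
    have h4 : (q * F t / (1 + q)) ^ 2 ≤ 0 := by
      by_contra h5
      push Not at h5
      have : 0 < (q * F t / (1 + q)) ^ 2 * (1 + 3 * q) := mul_pos h5 (by linarith)
      linarith
    have h5 : q * F t / (1 + q) = 0 := by
      have := le_antisymm h4 (sq_nonneg _)
      exact pow_eq_zero_iff (two_ne_zero) |>.1 this
    rcases div_eq_zero_iff.1 h5 with h | h
    · exact h
    · linarith
  have hM : F t = 0 := by
    rcases mul_eq_zero.1 hqM with h | h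
    · rw [h, zero_mul] at hcon
      have p1 : 0 ≤ ∑ i ∈ Finset.range t, (F i - F (i + 1)) ^ 2 :=
        Finset.sum_nonneg fun _ _ => sq_nonneg _
      have p2 : 0 ≤ ∑ j ∈ Finset.range (R + 1), (F t - G j) ^ 2 :=
        Finset.sum_nonneg fun _ _ => sq_nonneg _
      have z1 : ∑ i ∈ Finset.range t, (F i - F (i + 1)) ^ 2 = 0 := by
        nlinarith [sq_nonneg (w + w'), sq_nonneg (F 0 - w), sq_nonneg (F 0 - w')]
      have z2 : (w + w') ^ 2 = 0 := by
        nlinarith [sq_nonneg (w + w'), sq_nonneg (F 0 - w), sq_nonneg (F 0 - w')]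
      have z3 : (F 0 - w) ^ 2 = 0 := by
        nlinarith [sq_nonneg (w + w'), sq_nonneg (F 0 - w), sq_nonneg (F 0 - w')]
      have y2 := pow_eq_zero_iff (two_ne_zero) |>.1 z2
      have y3 := pow_eq_zero_iff (two_ne_zero) |>.1 z3
      have hF00 : F 0 = 0 := by linarith
      rw [Finset.sum_eq_zero_iff_of_nonneg (fun _ _ => sq_nonneg _)] at z1
      have : ∀ i ≤ t, F i = 0 := by
        intro i
        induction i with
        | zero => intro _; exact hF00
        | succ i ih =>
          intro hi
          have a := ih (by omega)
          have b := pow_eq_zero_iff (two_ne_zero) |>.1 (z1 i (Finset.mem_range.2 (by omega)))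
          linarith
      exact this t le_rfl
    · exact h
  have hFz : ∀ i ≤ t, F i = 0 := fun i hi =>
    le_antisymm (hM ▸ hF hi) (le_trans (le_trans hw hwF) (hF (Nat.zero_le i)))
  have hF00 := hFz 0 (Nat.zero_le _)
  have hwz : w = 0 := by linarith
  have hwz' : w' = 0 := by linarith
  have s1 : ∑ i ∈ Finset.range (t + 1), F i ^ 2 = 0 :=
    Finset.sum_eq_zero fun i hi => by
      rw [hFz i (by have := Finset.mem_range.1 hi; omega)]; simp
  have s2 : ∑ i ∈ Finset.range t, (F i - F (i + 1)) ^ 2 = 0 :=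
    Finset.sum_eq_zero fun i hi => by
      have := Finset.mem_range.1 hi
      rw [hFz i (by omega), hFz (i + 1) (by omega)]; simp
  rw [s1, hwz, hwz'] at hD
  rw [s1, s2, hwz, hwz', hF00, hM] at hcon
  simp only [zero_sub, neg_sq] at hcon
  norm_num at hcon hD
  have hq1 : 1 ≤ q := by
    by_contra h
    push Not at h
    nlinarith
  have hGz : ∑ j ∈ Finset.range (R + 1), G j = 0 := by
    have hS : 0 ≤ ∑ j ∈ Finset.range (R + 1), G j := Finset.sum_nonneg fun j _ => hG j
    set S := ∑ j ∈ Finset.range (R + 1), G j with hSdef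
    set ε := S / (R + 3) with hε
    have hRp : (0 : ℝ) < R + 3 := by positivity
    have h := hq 0 0 (fun _ => ε) G
    have e : ∑ j ∈ Finset.range (R + 1), (ε - G j) ^ 2 =
        (R + 1) * ε ^ 2 - 2 * ε * S + ∑ j ∈ Finset.range (R + 1), G j ^ 2 := by
      have : ∀ j, (ε - G j) ^ 2 = ε ^ 2 - 2 * ε * G j + G j ^ 2 := fun j => by ring
      simp only [this, Finset.sum_add_distrib, Finset.sum_sub_distrib, ← Finset.mul_sum]
      simp
      simp [hSdef]
    have e2 : 0 ≤ ∑ i ∈ Finset.range (t + 1), ε ^ 2 := Finset.sum_nonneg fun _ _ => sq_nonneg _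
    simp only [e] at h
    simp at h
    simp at e2
    have hSε : S = (R + 3) * ε := by rw [hε]; field_simp
    have h7 : ∑ j ∈ Finset.range (R + 1), G j ^ 2 ≤
      q * ((t + 1) * ε ^ 2 + ∑ j ∈ Finset.range (R + 1), G j ^ 2) := by nlinarith
    have h8 : (R + 3) * ε ^ 2 ≤ 0 := by rw [hSε] at h; nlinarith
    have h9 : ε ^ 2 = 0 := by
      by_contra h0
      have : 0 < ε ^ 2 := lt_of_le_of_ne (sq_nonneg _) (Ne.symm h0)
      have := mul_pos hRp this
      linarith
    have := pow_eq_zero_iff (two_ne_zero) |>.1 h9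
    rw [hSε, this, mul_zero]
  rw [Finset.sum_eq_zero_iff_of_nonneg (fun j _ => hG j)] at hGz
  have : ∑ j ∈ Finset.range (R + 1), G j ^ 2 = 0 :=
    Finset.sum_eq_zero fun j hj => by rw [hGz j hj]; simp
  linarith

theorem aux_core (q : ℝ) (l K P δ : ℕ) (hδ : δ ≤ 1) (hq0 : 0 ≤ q)
    (hq : AuxLow q (l + K + 1) (P + K + 1)) (w : ℝ) (f g : ℕ → ℝ)
    (hf : ∀ i, 0 ≤ f i) (hg : ∀ i, 0 ≤ g i) (hw : 0 ≤ w) (hwf : w ≤ f 0)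
    (hmax : (max (f 0) (f 1) - w) ^ 2 ≤ (f 1 - w) ^ 2)
    (hD : 0 < w ^ 2 + f 0 ^ 2 + ∑ i ∈ Finset.range (l + K + 2), f (i + 1) ^ 2 +
      ∑ i ∈ Finset.range (K + 1), f (i + 1 + δ) ^ 2 + ∑ j ∈ Finset.range P, g j ^ 2) :
    q * (w ^ 2 + f 0 ^ 2 + ∑ i ∈ Finset.range (l + K + 2), f (i + 1) ^ 2 +
      ∑ i ∈ Finset.range (K + 1), f (i + 1 + δ) ^ 2 + ∑ j ∈ Finset.range P, g j ^ 2) <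
    (w + f 0) ^ 2 + (f 1 - w) ^ 2 + (f 1 - f 0) ^ 2 +
      ∑ i ∈ Finset.range (l + K + 1), (f (i + 1) - f (i + 2)) ^ 2 +
      ∑ j ∈ Finset.range P, (f (l + K + 2) - g j) ^ 2 := by
  set S : ℕ → ℝ := fun i => partialSups f i with hS
  have hS0 : S 0 = f 0 := by simp [hS]
  have hS1 : ∀ i, S (i + 1) = max (S i) (f (i + 1)) := fun i => partialSups_add_one f i
  have hfS : ∀ i j, i ≤ j → f i ≤ S j := fun i j h => le_partialSups_of_le f h
  have hSm : Monotone S := partialSups_monotone f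
  have hdiff : ∀ i, (S i - S (i + 1)) ^ 2 ≤ (f i - f (i + 1)) ^ 2 := by
    intro i
    rw [hS1]
    have := hfS i i le_rfl
    rcases le_total (S i) (f (i + 1)) with h | h
    · rw [max_eq_right h]; nlinarith
    · rw [max_eq_left h]; nlinarith [sq_nonneg (f i - f (i + 1))]
  set M := S (l + K + 2) with hM
  set G : ℕ → ℝ := fun j => if j < P then max (g j) M else M with hG
  have hM0 : 0 ≤ M := le_trans (hf 0) (hfS 0 _ (Nat.zero_le _))
  have hGD : ∑ j ∈ Finset.range (P + K + 1), G j ^ 2 =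
      ∑ j ∈ Finset.range P, (max (g j) M) ^ 2 + ∑ j ∈ Finset.range (K + 1), M ^ 2 := by
    rw [add_assoc, Finset.sum_range_add]
    congr 1
    · refine Finset.sum_congr rfl fun j hj => ?_
      simp only [hG]; rw [if_pos (Finset.mem_range.1 hj)]
    · refine Finset.sum_congr rfl fun j hj => ?_
      simp only [hG]; rw [if_neg (by omega)]
  have hGN : ∑ j ∈ Finset.range (P + K + 1), (M - G j) ^ 2 =
      ∑ j ∈ Finset.range P, (M - max (g j) M) ^ 2 := by
    rw [add_assoc, Finset.sum_range_add]
    have : ∑ j ∈ Finset.range (K + 1), (M - G (P + j)) ^ 2 = 0 := by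
      refine Finset.sum_eq_zero fun j hj => ?_
      simp only [hG]; rw [if_neg (by omega)]; simp
    rw [this, add_zero]
    refine Finset.sum_congr rfl fun j hj => ?_
    simp only [hG]; rw [if_pos (Finset.mem_range.1 hj)]
  have hDle : w ^ 2 + f 0 ^ 2 + ∑ i ∈ Finset.range (l + K + 2), f (i + 1) ^ 2 +
      ∑ i ∈ Finset.range (K + 1), f (i + 1 + δ) ^ 2 + ∑ j ∈ Finset.range P, g j ^ 2 ≤
      w ^ 2 + f 0 ^ 2 + ∑ i ∈ Finset.range (l + K + 1 + 1), (fun i => S (i + 1)) i ^ 2 +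
      ∑ j ∈ Finset.range (P + K + 1), G j ^ 2 := by
    rw [hGD]
    have d1 : ∑ i ∈ Finset.range (l + K + 2), f (i + 1) ^ 2 ≤
        ∑ i ∈ Finset.range (l + K + 1 + 1), (fun i => S (i + 1)) i ^ 2 :=
      Finset.sum_le_sum fun i _ => pow_le_pow_left₀ (hf _) (hfS _ _ le_rfl) 2
    have d2 : ∑ i ∈ Finset.range (K + 1), f (i + 1 + δ) ^ 2 ≤
        ∑ j ∈ Finset.range (K + 1), M ^ 2 :=
      Finset.sum_le_sum fun i hi => pow_le_pow_left₀ (hf _)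
        (hfS _ _ (by have := Finset.mem_range.1 hi; omega)) 2
    have d3 : ∑ j ∈ Finset.range P, g j ^ 2 ≤ ∑ j ∈ Finset.range P, (max (g j) M) ^ 2 :=
      Finset.sum_le_sum fun i _ => pow_le_pow_left₀ (hg _) (le_max_left _ _) 2
    linarith
  have hst := aux_strict q (l + K + 1) (P + K) hq0 hq w (f 0) (fun i => S (i + 1)) G hw (hf 0)
    (hwf.trans (hfS 0 _ (Nat.zero_le _))) (hfS 0 _ (Nat.zero_le _))
    (fun i j h => hSm (by omega)) (fun j => by
      simp only [hG]; split_ifs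
      · exact le_max_of_le_right hM0
      · exact hM0) (by simp only [hG]; rw [if_neg (by omega)])
    (lt_of_lt_of_le hD hDle)
  refine lt_of_le_of_lt (mul_le_mul_of_nonneg_left hDle hq0) (lt_of_lt_of_le hst ?_)
  change _ + ∑ j ∈ Finset.range (P + K + 1), (M - G j) ^ 2 ≤ _
  rw [hGN]
  have n1 : ∑ j ∈ Finset.range P, (M - max (g j) M) ^ 2 ≤
      ∑ j ∈ Finset.range P, (f (l + K + 2) - g j) ^ 2 := by
    refine Finset.sum_le_sum fun j _ => ?_
    have := hfS (l + K + 2) (l + K + 2) le_rfl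
    rcases le_total (g j) M with h | h
    · rw [max_eq_right h]; nlinarith [sq_nonneg (f (l + K + 2) - g j)]
    · rw [max_eq_left h]; nlinarith
  have n2 : ∑ i ∈ Finset.range (l + K + 1), (S (i + 1) - S (i + 1 + 1)) ^ 2 ≤
      ∑ i ∈ Finset.range (l + K + 1), (f (i + 1) - f (i + 2)) ^ 2 :=
    Finset.sum_le_sum fun i _ => hdiff (i + 1)
  have n3 : (S 1 - w) ^ 2 ≤ (f 1 - w) ^ 2 := by rw [hS1 0, hS0]; exact hmax
  have n4 : (S 1 - f 0) ^ 2 ≤ (f 1 - f 0) ^ 2 := by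
    have := hdiff 0
    rw [hS0] at this
    norm_num at this
    nlinarith
  simp only [zero_add]
  linarith

theorem aux_abs_sub (x y : ℝ) : (|x| - |y|) ^ 2 ≤ (x + y) ^ 2 := by
  have h1 : |x| ^ 2 = x ^ 2 := sq_abs x
  have h2 : |y| ^ 2 = y ^ 2 := sq_abs y
  have h3 : -(x * y) ≤ |x| * |y| := by rw [← abs_mul]; exact neg_le_abs _
  nlinarith

theorem aux_sym (q : ℝ) (l K P : ℕ) (hq0 : 0 ≤ q) (hq : AuxLow q (l + K + 1) (P + K + 1))
    (s p g : ℕ → ℝ) (h0 : p 0 = s 0)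
    (hD : 0 < s 0 ^ 2 + 2 * ∑ i ∈ Finset.range (K + 2), s (i + 1) ^ 2 +
      ∑ i ∈ Finset.range l, p (i + 1) ^ 2 + ∑ j ∈ Finset.range P, g j ^ 2) :
    q * (s 0 ^ 2 + 2 * ∑ i ∈ Finset.range (K + 2), s (i + 1) ^ 2 +
      ∑ i ∈ Finset.range l, p (i + 1) ^ 2 + ∑ j ∈ Finset.range P, g j ^ 2) <
    2 * ∑ i ∈ Finset.range (K + 2), (s i + s (i + 1)) ^ 2 + 4 * s (K + 2) ^ 2 +
      ∑ i ∈ Finset.range l, (p i + p (i + 1)) ^ 2 + ∑ j ∈ Finset.range P, (p l + g j) ^ 2 := by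
  set f : ℕ → ℝ := fun i => if i ≤ K + 2 then |s (K + 2 - i)| else |p (i - (K + 2))| with hf
  have f1 : ∀ i ≤ K + 2, f i = |s (K + 2 - i)| := fun i hi => by simp only [hf]; rw [if_pos hi]
  have f2 : ∀ j, f (K + 2 + j) = |p j| := by
    intro j
    rcases j with _ | j
    · rw [f1 _ (by omega), h0]; simp
    · simp only [hf]; rw [if_neg (by omega)]; congr 2; omega
  have r1 : ∑ i ∈ Finset.range (K + 1), f (i + 1 + 0) ^ 2 =
      ∑ i ∈ Finset.range (K + 1), s (i + 1) ^ 2 := by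
    rw [← Finset.sum_range_reflect]
    refine Finset.sum_congr rfl fun i hi => ?_
    have := Finset.mem_range.1 hi
    rw [f1 _ (by omega), sq_abs]
    congr 2; omega
  have r2 : ∑ i ∈ Finset.range (l + K + 2), f (i + 1) ^ 2 =
      ∑ i ∈ Finset.range (K + 1), s (i + 1) ^ 2 + s 0 ^ 2 + ∑ i ∈ Finset.range l, p (i + 1) ^ 2 := by
    rw [show l + K + 2 = K + 2 + l by ring, Finset.sum_range_add]
    congr 1
    · rw [← Finset.sum_range_succ' (fun i => s i ^ 2) (K + 1), ← Finset.sum_range_reflect]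
      refine Finset.sum_congr rfl fun i hi => ?_
      have := Finset.mem_range.1 hi
      rw [f1 _ (by omega), sq_abs]
      congr 2; omega
    · refine Finset.sum_congr rfl fun i hi => ?_
      rw [add_assoc, f2, sq_abs]
  have e0 : f 0 = |s (K + 2)| := f1 0 (by omega)
  have e1 : f 1 = |s (K + 1)| := f1 1 (by omega)
  have eD : f 0 ^ 2 + f 0 ^ 2 + ∑ i ∈ Finset.range (l + K + 2), f (i + 1) ^ 2 +
      ∑ i ∈ Finset.range (K + 1), f (i + 1 + 0) ^ 2 + ∑ j ∈ Finset.range P, |g j| ^ 2 =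
      s 0 ^ 2 + 2 * ∑ i ∈ Finset.range (K + 2), s (i + 1) ^ 2 +
      ∑ i ∈ Finset.range l, p (i + 1) ^ 2 + ∑ j ∈ Finset.range P, g j ^ 2 := by
    rw [r1, r2, e0, sq_abs, Finset.sum_range_succ _ (K + 1)]
    simp only [sq_abs]
    ring
  have hc := aux_core q l K P 0 (by omega) hq0 hq (f 0) f (fun j => |g j|)
    (fun i => by simp only [hf]; split_ifs <;> positivity) (fun i => abs_nonneg _)
    (by rw [e0]; positivity) le_rfl (by
      rcases le_total (f 0) (f 1) with h | h
      · rw [max_eq_right h]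
      · rw [max_eq_left h]; nlinarith [sq_nonneg (f 1 - f 0)])
    (by rw [eD]; exact hD)
  rw [eD] at hc
  refine lt_of_lt_of_le hc ?_
  have n1 : ∑ j ∈ Finset.range P, (f (l + K + 2) - |g j|) ^ 2 ≤
      ∑ j ∈ Finset.range P, (p l + g j) ^ 2 := by
    refine Finset.sum_le_sum fun j _ => ?_
    rw [show l + K + 2 = K + 2 + l by ring, f2]
    exact aux_abs_sub _ _
  have n2 : ∑ i ∈ Finset.range (l + K + 1), (f (i + 1) - f (i + 2)) ^ 2 ≤
      ∑ i ∈ Finset.range (K + 1), (s i + s (i + 1)) ^ 2 +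
      ∑ i ∈ Finset.range l, (p i + p (i + 1)) ^ 2 := by
    rw [show l + K + 1 = K + 1 + l by ring, Finset.sum_range_add]
    refine add_le_add ?_ ?_
    · rw [← Finset.sum_range_reflect (fun i => (s i + s (i + 1)) ^ 2)]
      refine Finset.sum_le_sum fun i hi => ?_
      have := Finset.mem_range.1 hi
      rw [f1 _ (by omega), f1 _ (by omega)]
      refine (aux_abs_sub _ _).trans (le_of_eq ?_)
      rw [add_comm]
      congr 3 <;> omega
    · refine Finset.sum_le_sum fun i hi => ?_
      rw [show K + 1 + i + 1 = K + 2 + i by ring, show K + 1 + i + 2 = K + 2 + (i + 1) by ring,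
        f2, f2]
      exact aux_abs_sub _ _
  have n3 : (f 1 - f 0) ^ 2 ≤ (s (K + 1) + s (K + 1 + 1)) ^ 2 := by
    rw [e0, e1]; exact aux_abs_sub _ _
  have n4 : (f 0 + f 0) ^ 2 = 4 * s (K + 2) ^ 2 := by
    rw [e0, ← sq_abs (s (K + 2))]; ring
  have n5 : 0 ≤ ∑ i ∈ Finset.range (K + 1), (s i + s (i + 1)) ^ 2 :=
    Finset.sum_nonneg fun _ _ => sq_nonneg _
  rw [Finset.sum_range_succ _ (K + 1)]
  linarith

theorem aux_anti (q : ℝ) (l K P : ℕ) (hq0 : 0 ≤ q) (hq : AuxLow q (l + K + 1) (P + K + 1))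
    (a : ℕ → ℝ) (h0 : a 0 = 0)
    (hD : 0 < 2 * ∑ i ∈ Finset.range (K + 2), a (i + 1) ^ 2) :
    q * (2 * ∑ i ∈ Finset.range (K + 2), a (i + 1) ^ 2) <
    2 * ∑ i ∈ Finset.range (K + 2), (a i + a (i + 1)) ^ 2 := by
  set f : ℕ → ℝ := fun i => |a (min (max i 1) (K + 2))| with hf
  have f1 : ∀ i < K + 2, f (i + 1) = |a (i + 1)| := by
    intro i hi
    simp only [hf]; congr 2; omega
  have f2 : ∀ j, f (K + 2 + j) = |a (K + 2)| := by
    intro j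
    simp only [hf]; congr 2; omega
  have e0 : f 0 = |a 1| := by
    simp [hf]
  have e1 : f 1 = |a 1| := f1 0 (by omega)
  have r1 : ∑ i ∈ Finset.range (K + 1), f (i + 1 + 1) ^ 2 =
      ∑ i ∈ Finset.range (K + 1), a (i + 1 + 1) ^ 2 := by
    refine Finset.sum_congr rfl fun i hi => ?_
    have := Finset.mem_range.1 hi
    rw [f1 _ (by omega), sq_abs]
  have r2 : ∑ i ∈ Finset.range (K + 2), a (i + 1) ^ 2 ≤
      ∑ i ∈ Finset.range (l + K + 2), f (i + 1) ^ 2 := by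
    rw [show l + K + 2 = K + 2 + l by ring, Finset.sum_range_add _ (K + 2) l]
    have : ∑ i ∈ Finset.range (K + 2), f (i + 1) ^ 2 =
        ∑ i ∈ Finset.range (K + 2), a (i + 1) ^ 2 := by
      refine Finset.sum_congr rfl fun i hi => ?_
      rw [f1 _ (Finset.mem_range.1 hi), sq_abs]
    rw [this]
    have : 0 ≤ ∑ x ∈ Finset.range l, f (K + 2 + x + 1) ^ 2 :=
      Finset.sum_nonneg fun _ _ => sq_nonneg _
    linarith
  have hDle : 2 * ∑ i ∈ Finset.range (K + 2), a (i + 1) ^ 2 ≤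
      0 ^ 2 + f 0 ^ 2 + ∑ i ∈ Finset.range (l + K + 2), f (i + 1) ^ 2 +
      ∑ i ∈ Finset.range (K + 1), f (i + 1 + 1) ^ 2 +
      ∑ j ∈ Finset.range P, (fun _ : ℕ => f (l + K + 2)) j ^ 2 := by
    have : 0 ≤ ∑ j ∈ Finset.range P, (fun _ : ℕ => f (l + K + 2)) j ^ 2 :=
      Finset.sum_nonneg fun _ _ => sq_nonneg _
    rw [r1, e0, sq_abs]
    have h3 := Finset.sum_range_succ' (fun i => a (i + 1) ^ 2) (K + 1)
    simp only [zero_add] at h3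
    linarith
  have hc := aux_core q l K P 1 le_rfl hq0 hq 0 f (fun _ => f (l + K + 2))
    (fun i => abs_nonneg _) (fun i => abs_nonneg _) le_rfl (abs_nonneg _)
    (by rw [e0, e1, max_self]) (lt_of_lt_of_le hD hDle)
  refine lt_of_le_of_lt (mul_le_mul_of_nonneg_left hDle hq0) (lt_of_lt_of_le hc ?_)
  have n2 : ∑ i ∈ Finset.range (l + K + 1), (f (i + 1) - f (i + 2)) ^ 2 ≤
      ∑ i ∈ Finset.range (K + 1), (a (i + 1) + a (i + 1 + 1)) ^ 2 := by
    rw [show l + K + 1 = K + 1 + l by ring, Finset.sum_range_add]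
    have : ∑ i ∈ Finset.range l, (f (K + 1 + i + 1) - f (K + 1 + i + 2)) ^ 2 = 0 := by
      refine Finset.sum_eq_zero fun i hi => ?_
      rw [show K + 1 + i + 1 = K + 2 + i by ring, show K + 1 + i + 2 = K + 2 + (i + 1) by ring,
        f2, f2]
      simp
    rw [this, add_zero]
    refine Finset.sum_le_sum fun i hi => ?_
    have := Finset.mem_range.1 hi
    rw [f1 _ (by omega), show i + 2 = i + 1 + 1 by ring, f1 _ (by omega)]
    exact aux_abs_sub _ _
  have n5 : 0 ≤ ∑ i ∈ Finset.range (K + 1), (a (i + 1) + a (i + 1 + 1)) ^ 2 :=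
    Finset.sum_nonneg fun _ _ => sq_nonneg _
  rw [Finset.sum_range_succ' _ (K + 1), e0, e1, h0]
  have h6 : |a 1| ^ 2 = a 1 ^ 2 := sq_abs _
  simp only [sub_self, zero_add, sub_zero, h6]
  norm_num
  linarith

theorem aux_cycN (K : ℕ) (c d : ℕ → ℝ) (hd0 : d 0 = c 0)
    (hd : ∀ i < K + 2, d (i + 1) = c (2 * K + 4 - i)) :
    ∑ i ∈ Finset.range (2 * K + 4), (c i + c (i + 1)) ^ 2 + (c 0 + c (2 * K + 4)) ^ 2 =
    ∑ i ∈ Finset.range (K + 2), ((c i + c (i + 1)) ^ 2 + (d i + d (i + 1)) ^ 2) +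
      (c (K + 2) + d (K + 2)) ^ 2 := by
  rw [show 2 * K + 4 = (K + 2 + 1) + (K + 1) by ring, Finset.sum_range_add,
    Finset.sum_range_succ _ (K + 2), Finset.sum_add_distrib,
    Finset.sum_range_succ' (fun i => (d i + d (i + 1)) ^ 2) (K + 1), hd0, hd 0 (by omega),
    hd (K + 1) (by omega)]
  have : ∑ i ∈ Finset.range (K + 1), (d (i + 1) + d (i + 1 + 1)) ^ 2 =
      ∑ i ∈ Finset.range (K + 1), (c (K + 2 + 1 + i) + c (K + 2 + 1 + i + 1)) ^ 2 := by
    rw [← Finset.sum_range_reflect (fun i => (c (K + 2 + 1 + i) + c (K + 2 + 1 + i + 1)) ^ 2)]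
    refine Finset.sum_congr rfl fun i hi => ?_
    have := Finset.mem_range.1 hi
    rw [hd _ (by omega), hd _ (by omega), add_comm]
    congr 3 <;> omega
  rw [this, show 2 * K + 4 - (K + 1) = K + 2 + 1 by omega,
    show 2 * K + 4 - 0 = K + 2 + 1 + (K + 1) by omega]
  ring

theorem aux_cycD (K : ℕ) (c d : ℕ → ℝ)
    (hd : ∀ i < K + 2, d (i + 1) = c (2 * K + 4 - i)) :
    ∑ i ∈ Finset.range (2 * K + 5), c i ^ 2 =
    c 0 ^ 2 + ∑ i ∈ Finset.range (K + 2), (c (i + 1) ^ 2 + d (i + 1) ^ 2) := by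
  rw [Finset.sum_range_succ', show 2 * K + 4 = (K + 2) + (K + 2) by ring, Finset.sum_range_add,
    Finset.sum_add_distrib]
  have : ∑ i ∈ Finset.range (K + 2), d (i + 1) ^ 2 =
      ∑ i ∈ Finset.range (K + 2), c (K + 2 + i + 1) ^ 2 := by
    rw [← Finset.sum_range_reflect (fun i => c (K + 2 + i + 1) ^ 2)]
    refine Finset.sum_congr rfl fun i hi => ?_
    have := Finset.mem_range.1 hi
    rw [hd _ (by omega)]
    congr 2; omega
  rw [this]
  ring

theorem aux_main (K l P : ℕ) :
    qmin (Cstar (2 * K + 2 + 3 + l + P) 3 (l + K + 1)) <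
      qmin (Cstar (2 * K + 2 + 3 + l + P) (2 * K + 2 + 3) l) := by
  have hn : 2 * K + 2 + 3 + l + P = 3 + (l + K + 1) + (P + K + 1) := by ring
  have hq := aux_low (l + K + 1) (P + K + 1)
  have hq0 := aux_nonneg 0 (l + K + 1) (P + K + 1)
  simp only [zero_add] at hq0
  rw [← hn] at hq hq0
  set q := qmin (Cstar (2 * K + 2 + 3 + l + P) 3 (l + K + 1))
  obtain ⟨c, p, g, hp0, hD, hN⟩ := aux_attained (2 * K + 2) l P
  suffices h : q * auxD (2 * K + 2 + 3) l P c p g < auxN (2 * K + 2 + 3) l P c p g by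
    rw [hN] at h
    exact lt_of_mul_lt_mul_right h hD.le
  set d : ℕ → ℝ := fun i => if i = 0 then c 0 else c (2 * K + 4 - (i - 1)) with hd
  have hd0 : d 0 = c 0 := by simp [hd]
  have hd1 : ∀ i < K + 2, d (i + 1) = c (2 * K + 4 - i) := by intro i _; simp [hd]
  have hDe : auxD (2 * K + 2 + 3) l P c p g =
      (((c 0 + d 0) / 2) ^ 2 + 2 * ∑ i ∈ Finset.range (K + 2), ((c (i + 1) + d (i + 1)) / 2) ^ 2 +
      ∑ i ∈ Finset.range l, p (i + 1) ^ 2 + ∑ j ∈ Finset.range P, g j ^ 2) +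
      2 * ∑ i ∈ Finset.range (K + 2), ((c (i + 1) - d (i + 1)) / 2) ^ 2 := by
    unfold auxD
    rw [show 2 * K + 2 + 3 = 2 * K + 5 by ring, aux_cycD K c d hd1, hd0]
    have : ∑ i ∈ Finset.range (K + 2), (c (i + 1) ^ 2 + d (i + 1) ^ 2) =
        2 * ∑ i ∈ Finset.range (K + 2), ((c (i + 1) + d (i + 1)) / 2) ^ 2 +
        2 * ∑ i ∈ Finset.range (K + 2), ((c (i + 1) - d (i + 1)) / 2) ^ 2 := by
      rw [Finset.mul_sum, Finset.mul_sum, ← Finset.sum_add_distrib]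
      exact Finset.sum_congr rfl fun i _ => by ring
    rw [this]
    ring
  have hNe : auxN (2 * K + 2 + 3) l P c p g =
      (2 * ∑ i ∈ Finset.range (K + 2), ((c i + d i) / 2 + (c (i + 1) + d (i + 1)) / 2) ^ 2 +
      4 * ((c (K + 2) + d (K + 2)) / 2) ^ 2 +
      ∑ i ∈ Finset.range l, (p i + p (i + 1)) ^ 2 + ∑ j ∈ Finset.range P, (p l + g j) ^ 2) +
      2 * ∑ i ∈ Finset.range (K + 2), ((c i - d i) / 2 + (c (i + 1) - d (i + 1)) / 2) ^ 2 := by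
    unfold auxN
    rw [show 2 * K + 2 + 3 - 1 = 2 * K + 4 by omega, aux_cycN K c d hd0 hd1]
    have : ∑ i ∈ Finset.range (K + 2), ((c i + c (i + 1)) ^ 2 + (d i + d (i + 1)) ^ 2) =
        2 * ∑ i ∈ Finset.range (K + 2), ((c i + d i) / 2 + (c (i + 1) + d (i + 1)) / 2) ^ 2 +
        2 * ∑ i ∈ Finset.range (K + 2),
          ((c i - d i) / 2 + (c (i + 1) - d (i + 1)) / 2) ^ 2 := by
      rw [Finset.mul_sum, Finset.mul_sum, ← Finset.sum_add_distrib]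
      exact Finset.sum_congr rfl fun i _ => by ring
    rw [this]
    ring
  have hs := aux_sym q l K P hq0 hq (fun i => (c i + d i) / 2) p g (by simp [hd0, hp0])
  have ha := aux_anti q l K P hq0 hq (fun i => (c i - d i) / 2) (by simp [hd0])
  rw [hDe] at hD ⊢
  rw [hNe]
  set D1 := ((c 0 + d 0) / 2) ^ 2 +
      2 * ∑ i ∈ Finset.range (K + 2), ((c (i + 1) + d (i + 1)) / 2) ^ 2 +
      ∑ i ∈ Finset.range l, p (i + 1) ^ 2 + ∑ j ∈ Finset.range P, g j ^ 2 with hD1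
  set D2 := 2 * ∑ i ∈ Finset.range (K + 2), ((c (i + 1) - d (i + 1)) / 2) ^ 2 with hD2
  set N1 := 2 * ∑ i ∈ Finset.range (K + 2), ((c i + d i) / 2 + (c (i + 1) + d (i + 1)) / 2) ^ 2 +
      4 * ((c (K + 2) + d (K + 2)) / 2) ^ 2 +
      ∑ i ∈ Finset.range l, (p i + p (i + 1)) ^ 2 + ∑ j ∈ Finset.range P, (p l + g j) ^ 2 with hN1
  set N2 := 2 * ∑ i ∈ Finset.range (K + 2),
      ((c i - d i) / 2 + (c (i + 1) - d (i + 1)) / 2) ^ 2 with hN2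
  have b1 : 0 ≤ D1 := by rw [hD1]; positivity
  have b2 : 0 ≤ D2 := by rw [hD2]; positivity
  have b3 : 0 ≤ N1 := by rw [hN1]; positivity
  have b4 : 0 ≤ N2 := by rw [hN2]; positivity
  clear_value D1 D2 N1 N2
  rw [mul_add]
  rcases b1.eq_or_lt with h1 | h1
  · rw [← h1] at hD ⊢
    have := ha (by linarith)
    linarith
  · have h3 := hs h1
    rcases b2.eq_or_lt with h2 | h2
    · rw [← h2]
      linarith
    · have := ha h2
      linarith

/-- For `k ≥ 1` and `t = l + k - 1`, with both graphs of order `n ≥ 2k + 1 + l`,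
`q_min(C*_{3,t}) ≤ q_min(C*_{2k+1,l})`, with equality iff `k = 1`. -/
theorem qmin_Cstar_three_le
    (n k l : ℕ) (hk : 1 ≤ k) (hn : 2 * k + 1 + l ≤ n) :
    qmin (Cstar n 3 (l + k - 1)) ≤ qmin (Cstar n (2 * k + 1) l) ∧
      (qmin (Cstar n 3 (l + k - 1)) = qmin (Cstar n (2 * k + 1) l) ↔ k = 1) := by
  by_cases h1 : k = 1
  · subst h1
    simp
  · obtain ⟨K, rfl⟩ : ∃ K, k = K + 2 := ⟨k - 2, by omega⟩
    obtain ⟨P, rfl⟩ : ∃ P, n = 2 * K + 2 + 3 + l + P := ⟨n - (2 * K + 2 + 3 + l), by omega⟩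
    have h := aux_main K l P
    rw [show l + (K + 2) - 1 = l + K + 1 by omega,
      show 2 * (K + 2) + 1 = 2 * K + 2 + 3 by ring]
    exact ⟨h.le, fun e => absurd e h.ne, fun e => absurd e h1⟩
end
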